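/- arXiv:1711.11469 — 9 statements merged into one kernel-verified Lean document; each statement's English description precedes it below -/
import Mathlib

section
/- For every positive integer n and every real number k with 0 ≤ k ≤ n and k not an integer, let d = min{2⌊min{k, n−k}⌋ + 2, n}. Then there do not exist polynomials f₁, …, fₙ, f ∈ ℝ[x₁, …, xₙ] and a finite family g₁, …, g_m ∈ ℝ[x₁, …, xₙ] such that −1 = Σ_{i=1}^{n} f_i·(x_i² − x_i) + f·(Σ_{i=1}^{n} x_i − k) + Σ_{j=1}^{m} g_j², where indexdeg(f_i) ≤ d − 1 for all i, indexdeg(f) ≤ d − 1, and 2·indexdeg(g_j) ≤ d for all j. -/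
open MvPolynomial Finset

/-- The index degree of a polynomial in `ℝ[x₁,…,xₙ]`: the maximum, over monomials in the
support, of the number of distinct variables occurring with nonzero exponent. -/
noncomputable def indexDeg {n : ℕ} (p : MvPolynomial (Fin n) ℝ) : ℕ :=
  p.support.sup fun d => d.support.card

/-!
Let `E` be the linear functional on polynomials obtained by continuing in `k` the expectation over
a uniformly random `0/1` vector with `k` ones. It kills every multiple of `x_i² - x_i`, and every
multiple of `∑ x_i - k` by a polynomial of index degree less than `n`. It is therefore enough that
`E (g²) ≥ 0` whenever the index degree `t` of `g` satisfies `2t ≤ n` and `t ≤ min k (n - k) + 1`.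

Reduce `g` to a multilinear polynomial and induct on `t`. The homogeneous part of degree `t` splits
orthogonally as `h + u`, where `h` is harmonic and `u` is the degree `t` part of
`(∑ x_i) v` for some `v` of degree `t - 1`. As `∑ x_i` acts as the constant `k` under `E`, `u` can
be traded for a polynomial of degree `t - 1`. Finally `E (h · x^T) = 0` for `|T| < t`, so that the
cross terms vanish, and `E (h²)` is the square sum of the coefficients of `h` times
`k(k-1)⋯(k-t+1) · (n-k)(n-k-1)⋯(n-k-t+1) / (n(n-1)⋯(n-2t+1)) ≥ 0`.
-/

namespace Knapsack

open Matrix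

section PseudoProb

variable {K : Type*} [Field K]

/-- The hypergeometric probability that a uniformly random `k`-element subset of an `n`-element set
contains `a` given points and avoids `b` further ones, continued polynomially to arbitrary `k`.
It is meaningful only for `a + b ≤ n`: beyond that the denominator is zero. -/
noncomputable def pseudoProb (n : ℕ) (k : K) (a b : ℕ) : K :=
  (descPochhammer K a).eval k * (descPochhammer K b).eval (n - k) / n.descFactorial (a + b)

@[simp]
lemma pseudoProb_zero_zero (n : ℕ) (k : K) : pseudoProb n k 0 0 = 1 := by
  simp [pseudoProb]

lemma pseudoProb_succ_zero [CharZero K] {n s : ℕ} (k : K) (hs : s < n) :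
    (n - s) * pseudoProb n k (s + 1) 0 = (k - s) * pseudoProb n k s 0 := by
  have hfact : (n.descFactorial s : K) ≠ 0 := by
    simpa [Nat.descFactorial_eq_zero_iff_lt] using hs.le
  have hsub : (n - s : K) ≠ 0 := sub_ne_zero.2 (by exact_mod_cast hs.ne')
  simp only [pseudoProb, add_zero, descPochhammer_succ_eval, Nat.descFactorial_succ, Nat.cast_mul,
    Nat.cast_sub hs.le]
  field_simp

lemma pseudoProb_succ_left_add_succ_right [CharZero K] {n a b : ℕ} (k : K) (h : a + b < n) :
    pseudoProb n k (a + 1) b + pseudoProb n k a (b + 1) = pseudoProb n k a b := by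
  have hfact : (n.descFactorial (a + b) : K) ≠ 0 := by
    simpa [Nat.descFactorial_eq_zero_iff_lt] using h.le
  have hsub : (n - (a + b) : K) ≠ 0 := sub_ne_zero.2 (by exact_mod_cast h.ne')
  simp only [pseudoProb, ← add_assoc, add_right_comm a 1 b, descPochhammer_succ_eval,
    Nat.descFactorial_succ, Nat.cast_mul, Nat.cast_sub h.le, Nat.cast_add]
  field_simp
  ring

lemma pseudoProb_self_nonneg [LinearOrder K] [IsStrictOrderedRing K] {n t : ℕ} {k : K}
    (ht : (t : K) ≤ min k (n - k) + 1) : 0 ≤ pseudoProb n k t t := by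
  rw [← sub_le_iff_le_add, le_min_iff] at ht
  exact div_nonneg (mul_nonneg (descPochhammer_nonneg ht.1) (descPochhammer_nonneg ht.2))
    (Nat.cast_nonneg _)

lemma sum_powerset_pseudoProb [CharZero K] {α : Type*} [DecidableEq α] {n : ℕ} (k : K)
    (I : Finset α) {a b : ℕ} (h : a + b + #I ≤ n) :
    ∑ R ∈ I.powerset, pseudoProb n k (a + #(I \ R)) (b + #R) = pseudoProb n k a b := by
  induction I using Finset.induction_on generalizing a b with
  | empty => simp
  | insert x I hx ih =>
    rw [card_insert_of_notMem hx] at h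
    rw [sum_powerset_insert hx, ← pseudoProb_succ_left_add_succ_right k (by lia : a + b < n),
      ← ih (by lia : a + 1 + b + #I ≤ n), ← ih (by lia : a + (b + 1) + #I ≤ n)]
    congr 1 <;> refine sum_congr rfl fun R hR => ?_ <;>
      have hxR : x ∉ R := fun h => hx (mem_powerset.1 hR h)
    · rw [insert_sdiff_of_notMem _ hxR, card_insert_of_notMem (by simp [hx]), add_right_comm,
        add_assoc]
    · rw [insert_sdiff_insert, sdiff_insert_of_notMem hx, card_insert_of_notMem hxR,
        add_right_comm, add_assoc]

end PseudoProb

section LinearAlgebra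

variable {ι κ R : Type*} [Fintype ι] [Fintype κ]

lemma exists_sub_mulVec_vecMul_eq_zero [Field R] [LinearOrder R] [IsStrictOrderedRing R]
    (A : Matrix ι κ R) (b : ι → R) : ∃ v, (b - A *ᵥ v) ᵥ* A = 0 := by
  have hrange : LinearMap.range (Aᵀ * A).mulVecLin = LinearMap.range Aᵀ.mulVecLin := by
    refine Submodule.eq_of_le_of_finrank_eq ?_ ?_
    · rw [mulVecLin_mul]
      exact LinearMap.range_comp_le_range _ _
    · exact (rank_transpose_mul_self A).trans (rank_transpose A).symm
  obtain ⟨v, hv⟩ : Aᵀ *ᵥ b ∈ LinearMap.range (Aᵀ * A).mulVecLin := hrange ▸ ⟨b, rfl⟩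
  refine ⟨v, ?_⟩
  rw [← mulVec_transpose, mulVec_sub, mulVec_mulVec, ← hv, mulVecLin_apply, sub_self]

lemma dotProduct_mulVec_self_congr [CommSemiring R] {M : Matrix ι ι R} (hM : M.IsSymm)
    {a b : ι → R} {p : ι → Prop} (ha : ∀ i, ¬ p i → a i = 0) (hb : ∀ i, ¬ p i → b i = 0)
    (hab : ∀ i, p i → (M *ᵥ a) i = (M *ᵥ b) i) : a ⬝ᵥ M *ᵥ a = b ⬝ᵥ M *ᵥ b := by
  have hcongr {c : ι → R} (hc : ∀ i, ¬ p i → c i = 0) : c ⬝ᵥ M *ᵥ a = c ⬝ᵥ M *ᵥ b := by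
    refine sum_congr rfl fun i _ => ?_
    by_cases hi : p i
    · rw [hab i hi]
    · rw [hc i hi, zero_mul, zero_mul]
  calc
    a ⬝ᵥ M *ᵥ a = a ⬝ᵥ M *ᵥ b := hcongr ha
    _ = b ⬝ᵥ M *ᵥ a := by rw [dotProduct_mulVec, ← mulVec_transpose, hM.eq, dotProduct_comm]
    _ = b ⬝ᵥ M *ᵥ b := hcongr hb

end LinearAlgebra

section InclusionMatrix

variable {σ : Type*} [DecidableEq σ]

instance decidableRelCovBy : DecidableRel ((· ⋖ ·) : Finset σ → Finset σ → Prop) :=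
  fun _ _ => decidable_of_iff _ covBy_iff_card_sdiff_eq_one.symm

variable [Fintype σ]

lemma sum_filter_covBy {M : Type*} [AddCommMonoid M] (R : Finset σ) (f : Finset σ → M) :
    ∑ S with R ⋖ S, f S = ∑ i ∈ Rᶜ, f (insert i R) := by
  have himage : ({S | R ⋖ S} : Finset (Finset σ)) = Rᶜ.image (insert · R) := by
    ext S
    simp [covBy_iff_exists_insert]
  rw [himage, sum_image]
  simpa using insert_inj_on R

lemma card_filter_subset_and_covBy {R S : Finset σ} (h : R ⊆ S) :
    #{Q | R ⊆ Q ∧ Q ⋖ S} = #(S \ R) := by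
  have himage : ({Q | R ⊆ Q ∧ Q ⋖ S} : Finset (Finset σ)) = (S \ R).image S.erase := by
    ext Q
    simp only [mem_filter, mem_univ, true_and, covBy_iff_exists_erase, mem_image, mem_sdiff]
    constructor
    · rintro ⟨hRQ, i, hi, rfl⟩
      exact ⟨i, ⟨hi, fun hiR => notMem_erase i S (hRQ hiR)⟩, rfl⟩
    · rintro ⟨i, ⟨hi, hiR⟩, rfl⟩
      exact ⟨subset_erase.2 ⟨h, hiR⟩, i, hi, rfl⟩
  rw [himage, card_image_of_injOn ((erase_injOn S).mono (by simp))]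

variable {K : Type*}

variable (σ K) in
/-- The inclusion matrix between the `(t - 1)`-element and the `t`-element subsets of `σ`. Rows and
columns are indexed by all subsets, and the entries for subsets of other sizes are zero; in
particular the matrix is zero for `t = 0`. -/
def inclusionMatrix [Semiring K] (t : ℕ) : Matrix (Finset σ) (Finset σ) K :=
  of fun S R => if R ⋖ S ∧ #S = t then 1 else 0

lemma inclusionMatrix_mulVec_of_card_ne [Semiring K] {t : ℕ} (v : Finset σ → K)
    {S : Finset σ} (hS : #S ≠ t) : (inclusionMatrix σ K t *ᵥ v) S = 0 := by
  simp [mulVec, dotProduct, inclusionMatrix, hS]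

lemma vecMul_inclusionMatrix [Semiring K] (t : ℕ) (w : Finset σ → K) (R : Finset σ) :
    (w ᵥ* inclusionMatrix σ K t) R = if #R + 1 = t then ∑ i ∈ Rᶜ, w (insert i R) else 0 := by
  have hcard {i : σ} (hi : i ∈ Rᶜ) : #(insert i R) = #R + 1 :=
    card_insert_of_notMem (mem_compl.1 hi)
  calc
    (w ᵥ* inclusionMatrix σ K t) R = ∑ S with R ⋖ S, if #S = t then w S else 0 := by
      simp [vecMul, dotProduct, inclusionMatrix, sum_filter, ite_and]
    _ = _ := by
      rw [sum_filter_covBy, sum_congr rfl fun i hi => by rw [hcard hi]]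
      split_ifs <;> simp

lemma inclusionMatrix_mulVec_indicator_subset [Ring K] {t : ℕ} (R : Finset σ) {S : Finset σ}
    (hS : #S = t) :
    (inclusionMatrix σ K t *ᵥ fun Q => if R ⊆ Q then 1 else 0) S
      = if R ⊆ S then (t : K) - #R else 0 := by
  have hsum : (inclusionMatrix σ K t *ᵥ fun Q => if R ⊆ Q then 1 else 0) S
      = #{Q | R ⊆ Q ∧ Q ⋖ S} := by
    simp [mulVec, dotProduct, inclusionMatrix, hS, ← ite_and]
  rw [hsum]
  split_ifs with hRS
  · rw [card_filter_subset_and_covBy hRS, cast_card_sdiff hRS, hS]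
  · rw [filter_false_of_mem fun Q _ h => hRS (h.1.trans h.2.le), card_empty, Nat.cast_zero]

/-- The coefficient family `h` of a homogeneous multilinear polynomial of degree `t` is harmonic if
the sum of the `h S` over the `t`-element sets `S` containing a given `(t - 1)`-element set is
always zero, equivalently if `h` is orthogonal to the range of the inclusion matrix. -/
structure IsHarmonic [Semiring K] (t : ℕ) (h : Finset σ → K) : Prop where
  eq_zero_of_card_ne : ∀ S, #S ≠ t → h S = 0
  vecMul_inclusionMatrix_eq_zero : h ᵥ* inclusionMatrix σ K t = 0

lemma exists_isHarmonic_add_inclusionMatrix_mulVec [Field K] [LinearOrder K]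
    [IsStrictOrderedRing K] {t : ℕ} {a : Finset σ → K} (ha : ∀ S, #S ≠ t → a S = 0) :
    ∃ h v, IsHarmonic t h ∧ a = h + inclusionMatrix σ K t *ᵥ v := by
  obtain ⟨v, hv⟩ := exists_sub_mulVec_vecMul_eq_zero (inclusionMatrix σ K t) a
  refine ⟨a - inclusionMatrix σ K t *ᵥ v, v, ⟨fun S hS => ?_, hv⟩, (sub_add_cancel _ _).symm⟩
  rw [Pi.sub_apply, ha S hS, inclusionMatrix_mulVec_of_card_ne v hS, sub_zero]

lemma IsHarmonic.sum_filter_subset_of_card_lt [Ring K] [NoZeroDivisors K] [CharZero K] {t : ℕ}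
    {h : Finset σ → K} (hh : IsHarmonic t h) {R : Finset σ} (hR : #R < t) :
    ∑ S with R ⊆ S, h S = 0 := by
  have hne : (t : K) - #R ≠ 0 := sub_ne_zero.2 (by exact_mod_cast hR.ne')
  refine (mul_eq_zero.1 ?_).resolve_right hne
  calc
    (∑ S with R ⊆ S, h S) * (t - #R)
      = h ⬝ᵥ inclusionMatrix σ K t *ᵥ fun Q => if R ⊆ Q then 1 else 0 := by
        rw [sum_mul, sum_filter]
        refine sum_congr rfl fun S _ => ?_
        by_cases hS : #S = t
        · rw [inclusionMatrix_mulVec_indicator_subset R hS, mul_ite, mul_zero]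
        · simp [hh.eq_zero_of_card_ne S hS]
    _ = 0 := by rw [dotProduct_mulVec, hh.vecMul_inclusionMatrix_eq_zero, zero_dotProduct]

lemma IsHarmonic.sum_filter_subset_of_card_eq [Semiring K] {t : ℕ} {h : Finset σ → K}
    (hh : IsHarmonic t h) {R : Finset σ} (hR : #R = t) : ∑ S with R ⊆ S, h S = h R := by
  refine sum_eq_single_of_mem R (by simp) fun S hS hne => hh.eq_zero_of_card_ne S fun hcard => ?_
  exact hne (eq_of_subset_of_card_le (mem_filter.1 hS).2 (hcard.trans hR.symm).le).symm

end InclusionMatrix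

section MomentMatrix

variable {σ K : Type*} [Fintype σ] [DecidableEq σ] [Field K]

/-- The moment matrix of the pseudo-expectation. The entry at `(S, T)` is the value assigned to
`x^S * x^T`, which reduces to `x^(S ∪ T)` modulo the relations `x_i² = x_i`. -/
noncomputable def momentMatrix (k : K) : Matrix (Finset σ) (Finset σ) K :=
  of fun S T => pseudoProb (Fintype.card σ) k #(S ∪ T) 0

lemma momentMatrix_isSymm (k : K) : (momentMatrix k : Matrix (Finset σ) (Finset σ) K).IsSymm :=
  IsSymm.ext fun S T => by rw [momentMatrix, of_apply, of_apply, union_comm]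

lemma momentMatrix_eq_sum_powerset [CharZero K] (k : K) {S T : Finset σ}
    (h : #S + #T ≤ Fintype.card σ) :
    momentMatrix k T S = ∑ R ∈ T.powerset with R ⊆ S,
      pseudoProb (Fintype.card σ) k (#S + #T - #R) #R := by
  have hcard := card_union_add_card_inter S T
  have hpowerset : {R ∈ T.powerset | R ⊆ S} = (S ∩ T).powerset := by
    ext R
    simp only [mem_filter, mem_powerset, subset_inter_iff, and_comm]
  rw [momentMatrix, of_apply, union_comm, ← sum_powerset_pseudoProb k (S ∩ T) (by lia), hpowerset]
  refine sum_congr rfl fun R hR => ?_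
  have hRcard := card_sdiff_add_card_eq_card (mem_powerset.1 hR)
  congr 1 <;> lia

lemma IsHarmonic.momentMatrix_mulVec [CharZero K] {t : ℕ} (k : K) (ht : 2 * t ≤ Fintype.card σ)
    {h : Finset σ → K} (hh : IsHarmonic t h) {T : Finset σ} (hT : #T ≤ t) :
    (momentMatrix k *ᵥ h) T = pseudoProb (Fintype.card σ) k t t * h T := by
  have hexpand : (momentMatrix k *ᵥ h) T = ∑ R ∈ T.powerset,
      pseudoProb (Fintype.card σ) k (t + #T - #R) #R * ∑ S with R ⊆ S, h S := by
    simp only [mulVec, dotProduct, mul_sum, sum_filter]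
    rw [sum_comm]
    refine sum_congr rfl fun S _ => ?_
    by_cases hS : #S = t
    · simp only [momentMatrix_eq_sum_powerset k (by lia : #S + #T ≤ Fintype.card σ), hS, sum_mul,
        sum_filter, ite_mul, mul_ite, zero_mul, mul_zero]
    · simp [hh.eq_zero_of_card_ne S hS]
  rw [hexpand, sum_eq_single_of_mem T (mem_powerset_self T)]
  · rcases hT.eq_or_lt with hT | hT
    · rw [hh.sum_filter_subset_of_card_eq hT, hT, Nat.add_sub_cancel]
    · rw [hh.sum_filter_subset_of_card_lt hT, hh.eq_zero_of_card_ne T hT.ne, mul_zero, mul_zero]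
  · intro R hR hne
    have hRT : #R < #T := card_lt_card ((mem_powerset.1 hR).ssubset_of_ne hne)
    rw [hh.sum_filter_subset_of_card_lt (hRT.trans_le hT), mul_zero]

lemma sum_pseudoProb_card_insert [CharZero K] (k : K) {U : Finset σ} (hU : #U < Fintype.card σ) :
    ∑ i, pseudoProb (Fintype.card σ) k #(insert i U) 0
      = k * pseudoProb (Fintype.card σ) k #U 0 := by
  have hmem : ∑ i ∈ U, pseudoProb (Fintype.card σ) k #(insert i U) 0
      = #U * pseudoProb (Fintype.card σ) k #U 0 := by
    rw [sum_congr rfl fun i hi => by rw [insert_eq_of_mem hi], sum_const, nsmul_eq_mul]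
  have hcompl : ∑ i ∈ Uᶜ, pseudoProb (Fintype.card σ) k #(insert i U) 0
      = (k - #U) * pseudoProb (Fintype.card σ) k #U 0 := by
    rw [sum_congr rfl fun i hi => by rw [card_insert_of_notMem (mem_compl.1 hi)], sum_const,
      nsmul_eq_mul, card_compl, Nat.cast_sub hU.le, pseudoProb_succ_zero k hU]
  rw [← sum_add_sum_compl U, hmem, hcompl]
  ring

lemma sum_compl_momentMatrix_insert [CharZero K] (k : K) {S T : Finset σ}
    (h : #S + #T < Fintype.card σ) :
    ∑ i ∈ Sᶜ, momentMatrix k T (insert i S) = (k - #S) * momentMatrix k T S := by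
  have htotal : ∑ i, momentMatrix k T (insert i S) = k * momentMatrix k T S := by
    simpa only [momentMatrix, of_apply, union_insert] using
      sum_pseudoProb_card_insert k ((card_union_le T S).trans_lt (by lia))
  have hmem : ∑ i ∈ S, momentMatrix k T (insert i S) = #S * momentMatrix k T S := by
    rw [sum_congr rfl fun i hi => by rw [insert_eq_of_mem hi], sum_const, nsmul_eq_mul]
  rw [← sum_add_sum_compl S, hmem] at htotal
  linear_combination htotal

lemma momentMatrix_mulVec_inclusionMatrix_mulVec [CharZero K] {t : ℕ} (k : K)
    (ht : 2 * t ≤ Fintype.card σ) (v : Finset σ → K) {T : Finset σ} (hT : #T ≤ t) :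
    (momentMatrix k *ᵥ inclusionMatrix σ K t *ᵥ v) T
      = (momentMatrix k *ᵥ fun R => if #R + 1 = t then (k - #R) * v R else 0) T := by
  rw [mulVec, dotProduct_mulVec]
  refine sum_congr rfl fun R _ => ?_
  rw [vecMul_inclusionMatrix]
  by_cases hR : #R + 1 = t
  · simp only [hR, if_true, sum_compl_momentMatrix_insert k (by lia : #R + #T < Fintype.card σ)]
    ring
  · simp only [hR, if_false, zero_mul, mul_zero]

variable [LinearOrder K] [IsStrictOrderedRing K]

lemma exists_isHarmonic_add_momentMatrix_mulVec_eq {t : ℕ} (k : K) (ht : 2 * t ≤ Fintype.card σ)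
    {a : Finset σ → K} (ha : ∀ S, t < #S → a S = 0) :
    ∃ h g, IsHarmonic t h ∧ (∀ S, t ≤ #S → g S = 0) ∧
      ∀ T, #T ≤ t → (momentMatrix k *ᵥ a) T = (momentMatrix k *ᵥ (h + g)) T := by
  let top : Finset σ → K := fun S => if #S = t then a S else 0
  obtain ⟨h, v, hh, htop⟩ :=
    exists_isHarmonic_add_inclusionMatrix_mulVec (t := t) (a := top) fun S hS => if_neg hS
  refine ⟨h, a - top + fun R => if #R + 1 = t then (k - #R) * v R else 0, hh, fun S hS => ?_,
    fun T hT => ?_⟩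
  · have hne : #S + 1 ≠ t := by lia
    rcases hS.eq_or_lt with hS | hS
    · simp [top, hS]
    · simp [top, hne, hS.ne', ha S hS]
  · have hsplit : a = h + (a - top + inclusionMatrix σ K t *ᵥ v) := by
      rw [htop]
      abel
    conv_lhs => rw [hsplit]
    simp only [mulVec_add, Pi.add_apply, momentMatrix_mulVec_inclusionMatrix_mulVec k ht v hT]

lemma IsHarmonic.dotProduct_momentMatrix_mulVec_nonneg {t : ℕ} {k : K}
    (ht : 2 * t ≤ Fintype.card σ) (htk : (t : K) ≤ min k (Fintype.card σ - k) + 1)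
    {h : Finset σ → K} (hh : IsHarmonic t h) : 0 ≤ h ⬝ᵥ momentMatrix k *ᵥ h := by
  refine sum_nonneg fun T _ => ?_
  by_cases hT : #T = t
  · rw [hh.momentMatrix_mulVec k ht hT.le, mul_left_comm]
    exact mul_nonneg (pseudoProb_self_nonneg htk) (mul_self_nonneg _)
  · rw [hh.eq_zero_of_card_ne T hT, zero_mul]

lemma IsHarmonic.dotProduct_momentMatrix_mulVec_eq_zero {t : ℕ} (k : K)
    (ht : 2 * t ≤ Fintype.card σ) {g h : Finset σ → K} (hg : ∀ S, t ≤ #S → g S = 0)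
    (hh : IsHarmonic t h) : g ⬝ᵥ momentMatrix k *ᵥ h = 0 := by
  refine sum_eq_zero fun T _ => ?_
  rcases le_or_gt t #T with hT | hT
  · rw [hg T hT, zero_mul]
  · rw [hh.momentMatrix_mulVec k ht hT.le, hh.eq_zero_of_card_ne T hT.ne, mul_zero, mul_zero]

theorem dotProduct_momentMatrix_mulVec_self_nonneg {t : ℕ} {k : K}
    (ht : ∀ s < t, 2 * s ≤ Fintype.card σ ∧ (s : K) ≤ min k (Fintype.card σ - k) + 1)
    {a : Finset σ → K} (ha : ∀ S, t ≤ #S → a S = 0) : 0 ≤ a ⬝ᵥ momentMatrix k *ᵥ a := by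
  induction t generalizing a with
  | zero =>
    have hzero : a = 0 := funext fun S => ha S (Nat.zero_le _)
    rw [hzero, zero_dotProduct]
  | succ t ih =>
    obtain ⟨htn, htk⟩ := ht t t.lt_succ_self
    obtain ⟨h, g, hh, hg, hlow⟩ := exists_isHarmonic_add_momentMatrix_mulVec_eq k htn ha
    have hhg : ∀ S, ¬ #S ≤ t → (h + g) S = 0 := fun S hS => by
      rw [not_le] at hS
      rw [Pi.add_apply, hh.eq_zero_of_card_ne S hS.ne', hg S hS.le, add_zero]
    have hgh : g ⬝ᵥ momentMatrix k *ᵥ h = 0 :=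
      hh.dotProduct_momentMatrix_mulVec_eq_zero k htn hg
    have hhg_symm : h ⬝ᵥ momentMatrix k *ᵥ g = 0 := by
      rw [dotProduct_mulVec, ← mulVec_transpose, (momentMatrix_isSymm k).eq, dotProduct_comm, hgh]
    calc
      0 ≤ h ⬝ᵥ momentMatrix k *ᵥ h + g ⬝ᵥ momentMatrix k *ᵥ g :=
        add_nonneg (hh.dotProduct_momentMatrix_mulVec_nonneg htn htk)
          (ih (fun s hs => ht s (hs.trans t.lt_succ_self)) hg)
      _ = (h + g) ⬝ᵥ momentMatrix k *ᵥ (h + g) := by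
        simp only [mulVec_add, add_dotProduct, dotProduct_add, hgh, hhg_symm, add_zero, zero_add]
      _ = a ⬝ᵥ momentMatrix k *ᵥ a :=
        (dotProduct_mulVec_self_congr (p := (#· ≤ t)) (momentMatrix_isSymm k)
          (fun S hS => ha S (not_le.1 hS)) hhg hlow).symm

end MomentMatrix

section MultilinearCoeff

variable {σ K : Type*} [DecidableEq σ] [CommSemiring K]

/-- The coefficients of the multilinear reduction of a polynomial modulo the relations
`x_i² = x_i`, indexed by the sets of variables of the squarefree monomials. -/
noncomputable def multilinearCoeff : MvPolynomial σ K →ₗ[K] Finset σ → K :=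
  (basisMonomials σ K).constr K fun d => Pi.single d.support 1

lemma multilinearCoeff_monomial (d : σ →₀ ℕ) (c : K) :
    multilinearCoeff (monomial d c) = Pi.single d.support c := by
  have h := (basisMonomials σ K).constr_basis K
    (fun d : σ →₀ ℕ => (Pi.single d.support 1 : Finset σ → K)) d
  rw [coe_basisMonomials] at h
  rw [← mul_one c, ← smul_eq_mul, ← smul_monomial, map_smul, Pi.single_smul]
  exact congrArg (c • ·) h

lemma multilinearCoeff_eq_zero {f : MvPolynomial σ K} {S : Finset σ}
    (hS : ∀ d ∈ f.support, d.support ≠ S) : multilinearCoeff f S = 0 := by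
  rw [f.as_sum, map_sum, Finset.sum_apply]
  refine sum_eq_zero fun d hd => ?_
  rw [multilinearCoeff_monomial, Pi.single_eq_of_ne (hS d hd).symm]

end MultilinearCoeff

section PseudoExpectation

variable {σ K : Type*} [Fintype σ] [Field K]

/-- The pseudo-expectation, which treats the variables as the indicators of membership in a
uniformly random subset of `σ` with `k` elements, where `k` need not be a natural number. -/
noncomputable def pseudoExpectation (k : K) : MvPolynomial σ K →ₗ[K] K :=
  (basisMonomials σ K).constr K fun d => pseudoProb (Fintype.card σ) k #d.support 0

@[simp]
lemma pseudoExpectation_monomial (k : K) (d : σ →₀ ℕ) (c : K) :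
    pseudoExpectation k (monomial d c) = c * pseudoProb (Fintype.card σ) k #d.support 0 := by
  have h := (basisMonomials σ K).constr_basis K
    (fun d => pseudoProb (Fintype.card σ) k #d.support 0) d
  rw [coe_basisMonomials] at h
  rw [← mul_one c, ← smul_eq_mul, ← smul_monomial, map_smul, smul_eq_mul, smul_eq_mul, mul_one]
  exact congrArg (c * ·) h

@[simp]
lemma pseudoExpectation_one (k : K) : pseudoExpectation k (1 : MvPolynomial σ K) = 1 := by
  rw [← C_1, C_apply, pseudoExpectation_monomial, Finsupp.support_zero, card_empty,
    pseudoProb_zero_zero, mul_one]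

lemma pseudoExpectation_mul_sq_sub_self (k : K) (f : MvPolynomial σ K) (i : σ) :
    pseudoExpectation k (f * (X i ^ 2 - X i)) = 0 := by
  classical
  induction f using MvPolynomial.induction_on' with
  | monomial d c =>
    rw [mul_sub, map_sub, X_pow_eq_monomial, X, monomial_mul, monomial_mul,
      pseudoExpectation_monomial, pseudoExpectation_monomial, Finsupp.support_add_eq_union,
      Finsupp.support_add_eq_union, Finsupp.support_single _ two_ne_zero,
      Finsupp.support_single _ one_ne_zero, sub_self]
  | add p q hp hq => rw [add_mul, map_add, hp, hq, add_zero]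

lemma pseudoExpectation_mul_sum_X_sub_C [CharZero K] (k : K) {f : MvPolynomial σ K}
    (hf : ∀ d ∈ f.support, #d.support < Fintype.card σ) :
    pseudoExpectation k (f * (∑ i, X i - C k)) = 0 := by
  classical
  have hmonomial (d : σ →₀ ℕ) (hd : #d.support < Fintype.card σ) (c : K) :
      pseudoExpectation k (monomial d c * (∑ i, X i - C k)) = 0 := by
    have hX (i : σ) : pseudoExpectation k (monomial d c * X i)
        = c * pseudoProb (Fintype.card σ) k #(insert i d.support) 0 := by
      rw [X, monomial_mul, mul_one, pseudoExpectation_monomial, Finsupp.support_add_eq_union,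
        Finsupp.support_single _ one_ne_zero, union_comm, insert_eq]
    rw [mul_sub, mul_sum, map_sub, map_sum, sum_congr rfl fun i _ => hX i, ← mul_sum,
      sum_pseudoProb_card_insert k hd, mul_comm _ (C k), C_mul_monomial,
      pseudoExpectation_monomial]
    ring
  rw [f.as_sum, sum_mul, map_sum]
  exact sum_eq_zero fun d hd => hmonomial d (hf d hd) _

lemma pseudoExpectation_mul [DecidableEq σ] (k : K) (f g : MvPolynomial σ K) :
    pseudoExpectation k (f * g) = multilinearCoeff f ⬝ᵥ momentMatrix k *ᵥ multilinearCoeff g := by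
  induction f using MvPolynomial.induction_on' with
  | add p q hp hq => rw [add_mul, map_add, hp, hq, map_add, add_dotProduct]
  | monomial d c =>
    induction g using MvPolynomial.induction_on' with
    | add p q hp hq => rw [mul_add, map_add, hp, hq, map_add, mulVec_add, dotProduct_add]
    | monomial e b =>
      simp [monomial_mul, multilinearCoeff_monomial, Finsupp.support_add_eq_union, momentMatrix,
        mul_assoc, mul_left_comm]

lemma pseudoExpectation_sq_nonneg [LinearOrder K] [IsStrictOrderedRing K] {k : K}
    {g : MvPolynomial σ K} (hg : ∀ d ∈ g.support, 2 * #d.support ≤ Fintype.card σ ∧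
      (#d.support : K) ≤ min k (Fintype.card σ - k) + 1) :
    0 ≤ pseudoExpectation k (g ^ 2) := by
  classical
  rw [sq, pseudoExpectation_mul]
  refine dotProduct_momentMatrix_mulVec_self_nonneg (t := g.support.sup (#·.support + 1))
    (fun s hs => ?_) fun S hS => multilinearCoeff_eq_zero fun d hd hdS => ?_
  · obtain ⟨d, hd, hsd⟩ := Finset.lt_sup_iff.1 hs
    have hle : s ≤ #d.support := Nat.le_of_lt_succ hsd
    exact ⟨by linarith [(hg d hd).1], (Nat.cast_le.2 hle).trans (hg d hd).2⟩
  · have hlt : #d.support + 1 ≤ g.support.sup (#·.support + 1) :=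
      le_sup (f := fun d : σ →₀ ℕ => #d.support + 1) hd
    rw [hdS] at hlt
    lia

end PseudoExpectation

section IndexDeg

variable {n : ℕ} {p : MvPolynomial (Fin n) ℝ} {d : Fin n →₀ ℕ}

lemma card_support_le_indexDeg (hd : d ∈ p.support) : #d.support ≤ indexDeg p :=
  le_sup (f := fun d : Fin n →₀ ℕ => #d.support) hd

lemma card_support_bounds_of_two_mul_indexDeg_le {x : ℝ} (hx : 0 ≤ x)
    (hp : 2 * indexDeg p ≤ min (2 * ⌊x⌋.toNat + 2) n) (hd : d ∈ p.support) :
    2 * #d.support ≤ n ∧ (#d.support : ℝ) ≤ x + 1 := by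
  have hcard := card_support_le_indexDeg hd
  rw [Int.floor_toNat] at hp
  refine ⟨by lia, ?_⟩
  calc
    (#d.support : ℝ) ≤ (⌊x⌋₊ + 1 : ℕ) := Nat.cast_le.2 (by lia)
    _ = ⌊x⌋₊ + 1 := Nat.cast_add_one _
    _ ≤ x + 1 := by gcongr; exact Nat.floor_le hx

end IndexDeg

end Knapsack

theorem knapsack_indexdeg_sos_lower_bound_general {σ ι K : Type*} [Fintype σ] [Field K]
    [LinearOrder K] [IsStrictOrderedRing K] (k : K) (f : σ → MvPolynomial σ K)
    (f0 : MvPolynomial σ K) (s : Finset ι) (g : ι → MvPolynomial σ K)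
    (hf0 : ∀ d ∈ f0.support, #d.support < Fintype.card σ)
    (hg : ∀ j ∈ s, ∀ d ∈ (g j).support, 2 * #d.support ≤ Fintype.card σ ∧
      (#d.support : K) ≤ min k (Fintype.card σ - k) + 1) :
    -1 ≠ ∑ i, f i * (X i ^ 2 - X i) + f0 * (∑ i, X i - C k) + ∑ j ∈ s, g j ^ 2 := by
  classical
  intro heq
  have hneg : Knapsack.pseudoExpectation k (-1 : MvPolynomial σ K) = -1 := by
    rw [map_neg, Knapsack.pseudoExpectation_one]
  have hnonneg : 0 ≤ Knapsack.pseudoExpectation k (∑ j ∈ s, g j ^ 2) := by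
    rw [map_sum]
    exact sum_nonneg fun j hj => Knapsack.pseudoExpectation_sq_nonneg (hg j hj)
  rw [heq, map_add, map_add, map_sum, sum_eq_zero fun i _ =>
    Knapsack.pseudoExpectation_mul_sq_sub_self k (f i) i,
    Knapsack.pseudoExpectation_mul_sum_X_sub_C k hf0] at hneg
  linarith

theorem knapsack_indexdeg_sos_lower_bound (n : ℕ) (hn : 0 < n) (k : ℝ)
    (hk0 : 0 ≤ k) (hkn : k ≤ n) (hknotint : ∀ z : ℤ, k ≠ z) :
    ¬ ∃ (f : Fin n → MvPolynomial (Fin n) ℝ) (f0 : MvPolynomial (Fin n) ℝ)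
        (m : ℕ) (g : Fin m → MvPolynomial (Fin n) ℝ),
      (∀ i, indexDeg (f i) ≤ min (2 * (⌊min k ((n : ℝ) - k)⌋).toNat + 2) n - 1) ∧
      indexDeg f0 ≤ min (2 * (⌊min k ((n : ℝ) - k)⌋).toNat + 2) n - 1 ∧
      (∀ j, 2 * indexDeg (g j) ≤ min (2 * (⌊min k ((n : ℝ) - k)⌋).toNat + 2) n) ∧
      (-1 : MvPolynomial (Fin n) ℝ) =
        (∑ i, f i * (X i ^ 2 - X i)) + f0 * ((∑ i, X i) - C k) +
        ∑ j, (g j) ^ 2 := by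
  rintro ⟨f, f0, m, g, -, hf0, hg, heq⟩
  have hmin : 0 ≤ min k (n - k) := le_min hk0 (sub_nonneg.2 hkn)
  refine knapsack_indexdeg_sos_lower_bound_general k f f0 univ g (fun d hd => ?_)
    (fun j _ d hd => ?_) heq
  · have hcard := Knapsack.card_support_le_indexDeg hd
    rw [Fintype.card_fin]
    lia
  · simpa only [Fintype.card_fin] using
      Knapsack.card_support_bounds_of_two_mul_indexDeg_le hmin (hg j) hd
end

section
/- For every positive integer n and every real number k with 0 ≤ k ≤ n and k not an integer, let D = min{2⌊min{k, n−k}⌋ + 3, n}. Then there do not exist polynomials f₁, …, fₙ, f ∈ ℝ[x₁, …, xₙ] and a finite family g₁, …, g_m ∈ ℝ[x₁, …, xₙ] such that −1 = Σ_{i=1}^{n} f_i·(x_i² − x_i) + f·(Σ_{i=1}^{n} x_i − k) + Σ_{j=1}^{m} g_j², where deg(f_i) ≤ D − 2 for all i, deg(f) ≤ D − 1, and 2·deg(g_j) ≤ D for all j. -/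
open MvPolynomial Finset

/-!
Let `𝔼` be the linear functional on polynomials sending a monomial whose variables form a set `S`
to `k (k - 1) ⋯ (k - |S| + 1) / (n (n - 1) ⋯ (n - |S| + 1))`: for an integer `k` this is the
expectation over a uniformly random `0/1` point with exactly `k` ones. It annihilates the multiples
of `x_i² - x_i` and, in degree below `n`, those of `∑ x_i - k`, so applying it to a refutation gives
`-1 = ∑ 𝔼[g_j²]`, and it remains to see that the moment matrix of `𝔼` on subsets of size at most `d`
is positive semidefinite. Let `v` be an eigenvector with negative eigenvalue and `τ` the
transposition of two variables `x_a`, `x_b`. Then `v - τ v` is an eigenvector for the same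
eigenvalue and has the shape `(x_a - x_b) h`, on which the quadratic form is a nonnegative multiple
of the one for `n - 2`, `k - 1`, `d - 1` at `h`; by induction on `d` it is nonnegative, so
`v = τ v`. On symmetric vectors the form is `𝔼[v]²`, so `v = 0`.
-/

section QuadraticForms

open Matrix
open scoped ComplexOrder

theorem posSemidef_of_neg_eigenvector_eq_zero {𝕜 ι : Type*} [RCLike 𝕜] [Fintype ι]
    {A : Matrix ι ι 𝕜} (hA : A.IsHermitian)
    (h : ∀ μ : ℝ, μ < 0 → ∀ v, A *ᵥ v = μ • v → v = 0) : A.PosSemidef := by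
  classical
  rw [hA.posSemidef_iff_eigenvalues_nonneg]
  intro i
  by_contra! hneg
  refine hA.eigenvectorBasis.orthonormal.ne_zero i ?_
  ext j
  exact congrFun (h _ hneg _ (hA.mulVec_eigenvectorBasis i)) j

variable {ι : Type*} [Fintype ι] {A : Matrix ι ι ℝ} {μ : ℝ} {v : ι → ℝ}

theorem eq_zero_of_mulVec_eq_neg_smul (hμ : μ < 0) (hv : A *ᵥ v = μ • v)
    (hpos : 0 ≤ v ⬝ᵥ A *ᵥ v) : v = 0 := by
  rw [hv, dotProduct_smul, smul_eq_mul] at hpos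
  refine dotProduct_self_eq_zero.1 (le_antisymm ?_ ?_)
  · exact nonpos_of_mul_nonneg_right hpos hμ
  · exact sum_nonneg fun i _ => mul_self_nonneg (v i)

theorem comp_equiv_eq_self_of_mulVec_eq_neg_smul {e : ι ≃ ι} (he : A.submatrix e e = A)
    (hμ : μ < 0) (hv : A *ᵥ v = μ • v)
    (hpos : 0 ≤ (v - v ∘ e) ⬝ᵥ A *ᵥ (v - v ∘ e)) : v ∘ e = v := by
  have hve : A *ᵥ (v ∘ e) = μ • (v ∘ e) := by
    conv_lhs => rw [← he, submatrix_mulVec_equiv, Function.comp_assoc, e.self_comp_symm,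
      Function.comp_id, hv]
    rfl
  refine (sub_eq_zero.1 (eq_zero_of_mulVec_eq_neg_smul hμ ?_ hpos)).symm
  rw [mulVec_sub, hv, hve, smul_sub]

theorem dotProduct_mulVec_eq_submatrix {R ι κ : Type*} [NonUnitalNonAssocSemiring R] [Fintype ι]
    [Fintype κ] (A : Matrix ι ι R) {e : κ → ι} (he : Function.Injective e) {u : ι → R}
    (hu : ∀ i ∉ Set.range e, u i = 0) :
    u ⬝ᵥ A *ᵥ u = (u ∘ e) ⬝ᵥ A.submatrix e e *ᵥ (u ∘ e) := by
  have hinner : ∀ i, (A *ᵥ u) i = ∑ j, A i (e j) * u (e j) := fun i =>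
    (Fintype.sum_of_injective e he _ _ (fun j hj => by rw [hu j hj, mul_zero]) fun _ => rfl).symm
  exact (Fintype.sum_of_injective e he _ _ (fun i hi => by rw [hu i hi, zero_mul]) fun j =>
    congrArg (u (e j) * ·) (hinner (e j)).symm).symm

theorem dotProduct_fromBlocks_mulVec_sumElim_neg {R κ : Type*} [CommRing R] [Fintype κ]
    (P N : Matrix κ κ R) (y : κ → R) :
    Sum.elim y (-y) ⬝ᵥ fromBlocks P N N P *ᵥ Sum.elim y (-y) = 2 * (y ⬝ᵥ (P - N) *ᵥ y) := by
  simp only [fromBlocks_mulVec, sumElim_dotProduct_sumElim, Sum.elim_comp_inl, Sum.elim_comp_inr,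
    mulVec_neg, dotProduct_add, neg_dotProduct, dotProduct_neg, sub_mulVec, dotProduct_sub]
  ring

end QuadraticForms

section FallingRatio

/-- The ratio `k (k - 1) ⋯ (k - m + 1) / (n (n - 1) ⋯ (n - m + 1))` of falling factorials. For
integers `k ≤ n` it is the probability that a uniformly random `k`-subset of an `n`-set contains `m`
given elements; here `k` may be any real number. -/
noncomputable def fallingRatio (n k : ℝ) (m : ℕ) : ℝ := ∏ i ∈ range m, (k - i) / (n - i)

variable {n : ℝ} {m : ℕ}

@[simp]
theorem fallingRatio_zero (n k : ℝ) : fallingRatio n k 0 = 1 := prod_range_zero _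

theorem fallingRatio_succ (n k : ℝ) (m : ℕ) :
    fallingRatio n k (m + 1) = fallingRatio n k m * ((k - m) / (n - m)) := prod_range_succ _ _

theorem mul_fallingRatio_add_mul_fallingRatio_succ (h : n ≠ m) (k : ℝ) :
    m * fallingRatio n k m + (n - m) * fallingRatio n k (m + 1) = k * fallingRatio n k m := by
  rw [fallingRatio_succ]
  field [sub_ne_zero.2 h]

theorem fallingRatio_succ_sub_fallingRatio_add_two (h : (m + 1 : ℝ) < n) (k : ℝ) :
    fallingRatio n k (m + 1) - fallingRatio n k (m + 2) =
      k * (n - k) / (n * (n - 1)) * fallingRatio (n - 2) (k - 1) m := by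
  induction m with
  | zero =>
    have hn0 : n ≠ 0 := by rintro rfl; norm_num at h
    have hn1 : n - 1 ≠ 0 := by push_cast at h; linarith
    simp only [fallingRatio_succ, fallingRatio_zero]
    push_cast
    field
  | succ m ih =>
    push_cast at h
    have h1 : n - (m + 1) ≠ 0 := by linarith
    have h2 : n - (m + 2) ≠ 0 := by linarith
    rw [fallingRatio_succ (n - 2), ← mul_assoc, ← ih (by linarith), fallingRatio_succ n k (m + 2),
      fallingRatio_succ n k (m + 1)]
    push_cast
    rw [show n - 2 - m = n - (m + 2) by ring]
    field

theorem sum_fallingRatio_card_insert {α : Type*} [DecidableEq α] {V U : Finset α} (hU : U ⊂ V)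
    (k : ℝ) : ∑ i ∈ V, fallingRatio #V k #(insert i U) = k * fallingRatio #V k #U := by
  have hin : ∑ i ∈ U, fallingRatio #V k #(insert i U) = #U * fallingRatio #V k #U := by
    rw [sum_congr rfl fun i hi => by rw [insert_eq_of_mem hi], sum_const, nsmul_eq_mul]
  have hout : ∑ i ∈ V \ U, fallingRatio #V k #(insert i U) =
      (#V - #U) * fallingRatio #V k (#U + 1) := by
    rw [sum_congr rfl fun i hi => by rw [card_insert_of_notMem (mem_sdiff.1 hi).2], sum_const,
      nsmul_eq_mul, cast_card_sdiff hU.1]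
  have hcard : (#V : ℝ) ≠ #U := by exact_mod_cast (card_lt_card hU).ne'
  rw [← sum_sdiff hU.1, hin, hout, add_comm, mul_fallingRatio_add_mul_fallingRatio_succ hcard]

end FallingRatio

section SmallSubsets

variable {α : Type*} {V W S : Finset α} {a b : α} {d : ℕ}

/-- The subsets of `V` with at most `d` elements; they index the multilinear monomials of degree at
most `d` in the variables `V`. -/
def smallSubsets (V : Finset α) (d : ℕ) : Finset (Finset α) := {S ∈ V.powerset | #S ≤ d}

theorem mem_smallSubsets : S ∈ smallSubsets V d ↔ S ⊆ V ∧ #S ≤ d := by simp [smallSubsets]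

theorem empty_mem_smallSubsets (V : Finset α) (d : ℕ) : ∅ ∈ smallSubsets V d := by
  simp [mem_smallSubsets]

variable [DecidableEq α]

theorem map_swap_eq_self (h : a ∈ S ↔ b ∈ S) : S.map (Equiv.swap a b).toEmbedding = S := by
  ext x
  simp only [mem_map_equiv, Equiv.symm_swap, Equiv.swap_apply_def]
  split_ifs with hxa hxb
  · rw [hxa, h]
  · rw [hxb, h]
  · rfl

theorem map_swap_insert (ha : a ∉ S) (hb : b ∉ S) :
    (insert a S).map (Equiv.swap a b).toEmbedding = insert b S := by
  rw [map_insert, map_swap_eq_self (iff_of_false ha hb), Equiv.coe_toEmbedding,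
    Equiv.swap_apply_left]

/-- The permutation of the small subsets of `V` induced by the transposition of two elements of
`V`. -/
def swapSmallSubsets (ha : a ∈ V) (hb : b ∈ V) (d : ℕ) : Equiv.Perm (smallSubsets V d) :=
  (Equiv.swap a b).finsetCongr.subtypeEquiv fun S => by
    rw [mem_smallSubsets, mem_smallSubsets, Equiv.finsetCongr_apply, card_map]
    nth_rw 2 [← map_swap_eq_self (iff_of_true ha hb)]
    rw [map_subset_map]

theorem coe_swapSmallSubsets (ha : a ∈ V) (hb : b ∈ V) (S : smallSubsets V d) :
    (swapSmallSubsets ha hb d S : Finset α) = S.1.map (Equiv.swap a b).toEmbedding := rfl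

theorem swapSmallSubsets_involutive (ha : a ∈ V) (hb : b ∈ V) :
    Function.Involutive (swapSmallSubsets ha hb d) := fun S => Subtype.ext <| by
  ext x
  simp [coe_swapSmallSubsets]

/-- Adding an element `a` of `V` to the small subsets of a part `W` of `V`. -/
def insertSmallSubsets (hW : W ⊆ V) (ha : a ∈ V) (R : smallSubsets W d) :
    smallSubsets V (d + 1) :=
  ⟨insert a R, by
    obtain ⟨hR, hRd⟩ := mem_smallSubsets.1 R.2
    exact mem_smallSubsets.2 ⟨insert_subset ha (hR.trans hW), (card_insert_le _ _).trans (by lia)⟩⟩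

theorem coe_insertSmallSubsets (hW : W ⊆ V) (ha : a ∈ V) (R : smallSubsets W d) :
    (insertSmallSubsets hW ha R : Finset α) = insert a R.1 := rfl

theorem notMem_of_smallSubsets_sdiff (R : smallSubsets (V \ {a, b}) d) : a ∉ R.1 ∧ b ∉ R.1 := by
  have hR := (mem_smallSubsets.1 R.2).1
  exact ⟨fun h => by simpa using hR h, fun h => by simpa using hR h⟩

/-- Adding `a` (left summand) or `b` (right summand) to a small subset of `V \ {a, b}`. The range
consists of the small subsets of `V` that are moved by the transposition of `a` and `b`. -/
def insertPair (ha : a ∈ V) (hb : b ∈ V) :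
    smallSubsets (V \ {a, b}) d ⊕ smallSubsets (V \ {a, b}) d → smallSubsets V (d + 1) :=
  Sum.elim (insertSmallSubsets sdiff_subset ha) (insertSmallSubsets sdiff_subset hb)

theorem insertPair_injective (ha : a ∈ V) (hb : b ∈ V) (hab : a ≠ b) :
    Function.Injective (insertPair (d := d) ha hb) := by
  refine Function.Injective.sumElim ?_ ?_ ?_
  · intro R R' h
    rw [Subtype.ext_iff, coe_insertSmallSubsets, coe_insertSmallSubsets] at h
    rw [Subtype.ext_iff, ← erase_insert (notMem_of_smallSubsets_sdiff R).1, h,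
      erase_insert (notMem_of_smallSubsets_sdiff R').1]
  · intro R R' h
    rw [Subtype.ext_iff, coe_insertSmallSubsets, coe_insertSmallSubsets] at h
    rw [Subtype.ext_iff, ← erase_insert (notMem_of_smallSubsets_sdiff R).2, h,
      erase_insert (notMem_of_smallSubsets_sdiff R').2]
  · intro R R' h
    rw [Subtype.ext_iff, coe_insertSmallSubsets, coe_insertSmallSubsets] at h
    have hmem : a ∈ insert b R'.1 := h ▸ mem_insert_self a R.1
    simp [hab, (notMem_of_smallSubsets_sdiff R').1] at hmem

theorem swapSmallSubsets_inl (ha : a ∈ V) (hb : b ∈ V) (R : smallSubsets (V \ {a, b}) d) :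
    swapSmallSubsets ha hb (d + 1) (insertPair ha hb (.inl R)) = insertPair ha hb (.inr R) :=
  Subtype.ext <|
    map_swap_insert (notMem_of_smallSubsets_sdiff R).1 (notMem_of_smallSubsets_sdiff R).2

theorem erase_mem_smallSubsets_sdiff (hS : S ∈ smallSubsets V (d + 1)) (ha : a ∈ S) (hb : b ∉ S) :
    S.erase a ∈ smallSubsets (V \ {a, b}) d := by
  obtain ⟨hSV, hSd⟩ := mem_smallSubsets.1 hS
  rw [mem_smallSubsets, card_erase_of_mem ha]
  refine ⟨fun x hx => ?_, by lia⟩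
  obtain ⟨hxa, hxS⟩ := mem_erase.1 hx
  simp [hSV hxS, hxa, ne_of_mem_of_not_mem hxS hb]

theorem swapSmallSubsets_eq_self_of_notMem_range (ha : a ∈ V) (hb : b ∈ V)
    {S : smallSubsets V (d + 1)} (hS : S ∉ Set.range (insertPair ha hb)) :
    swapSmallSubsets ha hb (d + 1) S = S := by
  refine Subtype.ext (map_swap_eq_self ⟨fun haS => ?_, fun hbS => ?_⟩)
  · by_contra hbS
    exact hS ⟨.inl ⟨_, erase_mem_smallSubsets_sdiff S.2 haS hbS⟩, Subtype.ext (insert_erase haS)⟩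
  · by_contra haS
    have herase := erase_mem_smallSubsets_sdiff S.2 hbS haS
    rw [pair_comm] at herase
    exact hS ⟨.inr ⟨_, herase⟩, Subtype.ext (insert_erase hbS)⟩

end SmallSubsets

section MomentMatrix

open Matrix

variable {α : Type*} [DecidableEq α] {V : Finset α} {a b : α} {d : ℕ}

/-- The matrix of the quadratic form `g ↦ 𝔼[g²]` on multilinear polynomials of degree at most `d` in
the variables `V`, for the pseudo-expectation `𝔼` of the knapsack equation `∑ x_i = k`. -/
noncomputable def momentMatrix (V : Finset α) (d : ℕ) (k : ℝ) :
    Matrix (smallSubsets V d) (smallSubsets V d) ℝ :=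
  of fun S T => fallingRatio #V k #(S.1 ∪ T.1)

theorem momentMatrix_apply (k : ℝ) (S T : smallSubsets V d) :
    momentMatrix V d k S T = fallingRatio #V k #(S.1 ∪ T.1) := rfl

theorem momentMatrix_isHermitian (V : Finset α) (d : ℕ) (k : ℝ) :
    (momentMatrix V d k).IsHermitian :=
  IsHermitian.ext fun S T => by
    rw [momentMatrix_apply, momentMatrix_apply, union_comm, star_trivial]

theorem momentMatrix_submatrix_swap (ha : a ∈ V) (hb : b ∈ V) (k : ℝ) :
    (momentMatrix V d k).submatrix (swapSmallSubsets ha hb d) (swapSmallSubsets ha hb d) =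
      momentMatrix V d k := by
  ext S T
  rw [submatrix_apply, momentMatrix_apply, momentMatrix_apply, coe_swapSmallSubsets,
    coe_swapSmallSubsets, ← map_union, card_map]

theorem momentMatrix_submatrix_insertPair (ha : a ∈ V) (hb : b ∈ V) (hab : a ≠ b) (k : ℝ) :
    (momentMatrix V (d + 1) k).submatrix (insertPair ha hb) (insertPair ha hb) =
      fromBlocks (of fun R R' => fallingRatio #V k (#(R.1 ∪ R'.1) + 1))
        (of fun R R' => fallingRatio #V k (#(R.1 ∪ R'.1) + 2))
        (of fun R R' => fallingRatio #V k (#(R.1 ∪ R'.1) + 2))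
        (of fun R R' => fallingRatio #V k (#(R.1 ∪ R'.1) + 1)) := by
  ext (R | R) (R' | R') <;>
  · obtain ⟨haR, hbR⟩ := notMem_of_smallSubsets_sdiff R
    obtain ⟨haR', hbR'⟩ := notMem_of_smallSubsets_sdiff R'
    simp [momentMatrix_apply, insertPair, coe_insertSmallSubsets, insert_union, union_insert,
      card_insert_of_notMem, haR, hbR, haR', hbR', hab, hab.symm]

theorem cast_card_sdiff_pair (ha : a ∈ V) (hb : b ∈ V) (hab : a ≠ b) :
    (#(V \ {a, b}) : ℝ) = #V - 2 := by
  rw [cast_card_sdiff (by simp [insert_subset_iff, ha, hb]), card_pair hab, Nat.cast_ofNat]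

theorem fallingRatio_sub_eq_smul_momentMatrix (ha : a ∈ V) (hb : b ∈ V) (hab : a ≠ b) (k : ℝ) :
    ((of fun R R' => fallingRatio #V k (#(R.1 ∪ R'.1) + 1)) -
        of fun R R' => fallingRatio #V k (#(R.1 ∪ R'.1) + 2)) =
      (k * (#V - k) / (#V * (#V - 1))) • momentMatrix (V \ {a, b}) d (k - 1) := by
  ext R R'
  have hcard : (#(R.1 ∪ R'.1) : ℝ) ≤ #V - 2 := by
    rw [← cast_card_sdiff_pair ha hb hab]
    exact_mod_cast card_le_card
      (union_subset (mem_smallSubsets.1 R.2).1 (mem_smallSubsets.1 R'.2).1)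
  rw [Matrix.smul_apply, momentMatrix_apply, cast_card_sdiff_pair ha hb hab, smul_eq_mul]
  exact fallingRatio_succ_sub_fallingRatio_add_two (by linarith) k

theorem dotProduct_momentMatrix_mulVec_of_swap_eq_neg (ha : a ∈ V) (hb : b ∈ V) (hab : a ≠ b)
    (k : ℝ) {u : smallSubsets V (d + 1) → ℝ}
    (hu : ∀ S, u (swapSmallSubsets ha hb (d + 1) S) = -u S) :
    u ⬝ᵥ momentMatrix V (d + 1) k *ᵥ u =
      2 * (k * (#V - k) / (#V * (#V - 1))) *
        ((fun R => u (insertPair ha hb (.inl R))) ⬝ᵥ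
          momentMatrix (V \ {a, b}) d (k - 1) *ᵥ fun R => u (insertPair ha hb (.inl R))) := by
  have hsupp : ∀ S ∉ Set.range (insertPair ha hb), u S = 0 := fun S hS =>
    self_eq_neg.1 (by rw [← hu, swapSmallSubsets_eq_self_of_notMem_range ha hb hS])
  have hpair : u ∘ insertPair ha hb =
      Sum.elim (fun R => u (insertPair ha hb (.inl R)))
        (-fun R => u (insertPair ha hb (.inl R))) := by
    ext (R | R)
    · rfl
    · simp [← swapSmallSubsets_inl, hu]
  rw [dotProduct_mulVec_eq_submatrix _ (insertPair_injective ha hb hab) hsupp, hpair,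
    momentMatrix_submatrix_insertPair ha hb hab, dotProduct_fromBlocks_mulVec_sumElim_neg,
    fallingRatio_sub_eq_smul_momentMatrix ha hb hab, smul_mulVec, dotProduct_smul, smul_eq_mul,
    mul_assoc]

/-- Invariance of a vector indexed by small subsets under all transpositions of elements of `V`,
that is, under all permutations of the variables. -/
def SwapInvariant (v : smallSubsets V d → ℝ) : Prop :=
  ∀ ⦃a⦄ (ha : a ∈ V) ⦃b⦄ (hb : b ∈ V), v ∘ swapSmallSubsets ha hb d = v

theorem SwapInvariant.momentMatrix_mulVec {v : smallSubsets V d → ℝ} (hv : SwapInvariant v)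
    (k : ℝ) : SwapInvariant (momentMatrix V d k *ᵥ v) := fun a ha b hb => by
  conv_rhs => rw [← momentMatrix_submatrix_swap ha hb k, submatrix_mulVec_equiv,
    (Equiv.comp_symm_eq _ _ _).2 (hv ha hb).symm]

theorem SwapInvariant.apply_insert {v : smallSubsets V d → ℝ} (hv : SwapInvariant v)
    {S : Finset α} (ha : a ∈ V \ S) (hb : b ∈ V \ S) (haS : insert a S ∈ smallSubsets V d)
    (hbS : insert b S ∈ smallSubsets V d) : v ⟨insert a S, haS⟩ = v ⟨insert b S, hbS⟩ := by
  obtain ⟨haV, ha⟩ := mem_sdiff.1 ha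
  obtain ⟨hbV, hb⟩ := mem_sdiff.1 hb
  rw [← congrFun (hv haV hbV)]
  exact congrArg v (Subtype.ext (map_swap_insert ha hb))

theorem sum_sum_fallingRatio_insert_mul (hd : 2 * d ≤ #V) (k : ℝ) (v : smallSubsets V d → ℝ)
    {S : Finset α} (hS : S ⊆ V) (hSd : #S < d) :
    ∑ i ∈ V, ∑ T : smallSubsets V d, fallingRatio #V k #(insert i S ∪ T.1) * v T =
      k * ∑ T : smallSubsets V d, fallingRatio #V k #(S ∪ T.1) * v T := by
  rw [sum_comm, mul_sum]
  refine sum_congr rfl fun T _ => ?_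
  obtain ⟨hT, hTd⟩ := mem_smallSubsets.1 T.2
  have hlt : #(S ∪ T.1) < #V := (card_union_le _ _).trans_lt (by lia)
  have hssub : S ∪ T.1 ⊂ V := ssubset_of_subset_of_ne (union_subset hS hT) (by grind)
  simp only [insert_union]
  rw [← sum_mul, sum_fallingRatio_card_insert hssub, mul_assoc]

theorem SwapInvariant.sub_mul_momentMatrix_mulVec_insert {v : smallSubsets V d → ℝ}
    (hv : SwapInvariant v) (hd : 2 * d ≤ #V) (k : ℝ) {S : Finset α} (ha : a ∉ S)
    (hS : S ∈ smallSubsets V d) (haS : insert a S ∈ smallSubsets V d) :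
    (#V - #S) * (momentMatrix V d k *ᵥ v) ⟨insert a S, haS⟩ =
      (k - #S) * (momentMatrix V d k *ᵥ v) ⟨S, hS⟩ := by
  obtain ⟨haSV, haSd⟩ := mem_smallSubsets.1 haS
  obtain ⟨haV, hSV⟩ := insert_subset_iff.1 haSV
  rw [card_insert_of_notMem ha] at haSd
  set y := momentMatrix V d k *ᵥ v
  let F (U : Finset α) : ℝ := ∑ T : smallSubsets V d, fallingRatio #V k #(U ∪ T.1) * v T
  have hin : ∑ i ∈ S, F (insert i S) = #S * y ⟨S, hS⟩ := by
    rw [sum_congr rfl fun i hi => by rw [insert_eq_of_mem hi], sum_const, nsmul_eq_mul]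
    rfl
  have hF : ∀ i ∈ V \ S, F (insert i S) = y ⟨insert a S, haS⟩ := fun i hi =>
    (hv.momentMatrix_mulVec k).apply_insert hi (mem_sdiff.2 ⟨haV, ha⟩)
      (mem_smallSubsets.2 ⟨insert_subset (mem_sdiff.1 hi).1 hSV,
        (card_insert_of_notMem (mem_sdiff.1 hi).2).trans_le haSd⟩) haS
  have hout : ∑ i ∈ V \ S, F (insert i S) = (#V - #S) * y ⟨insert a S, haS⟩ := by
    rw [sum_congr rfl hF, sum_const, nsmul_eq_mul, cast_card_sdiff hSV]
  have hall : ∑ i ∈ V, F (insert i S) = k * y ⟨S, hS⟩ :=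
    sum_sum_fallingRatio_insert_mul hd k v hSV (by lia)
  rw [← sum_sdiff hSV, hin, hout] at hall
  linear_combination hall

theorem SwapInvariant.momentMatrix_mulVec_apply {v : smallSubsets V d → ℝ} (hv : SwapInvariant v)
    (hd : 2 * d ≤ #V) (k : ℝ) (S : smallSubsets V d) :
    (momentMatrix V d k *ᵥ v) S =
      fallingRatio #V k #S.1 * (momentMatrix V d k *ᵥ v) ⟨∅, empty_mem_smallSubsets V d⟩ := by
  obtain ⟨S, haS⟩ := S
  induction S using Finset.induction with
  | empty => simp
  | insert a S ha ih =>
    obtain ⟨haSV, haSd⟩ := mem_smallSubsets.1 haS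
    rw [card_insert_of_notMem ha] at haSd
    have hS : S ∈ smallSubsets V d :=
      mem_smallSubsets.2 ⟨(subset_insert a S).trans haSV, by lia⟩
    have hrec := hv.sub_mul_momentMatrix_mulVec_insert hd k ha hS haS
    have hne : (#V : ℝ) - #S ≠ 0 := by
      rw [sub_ne_zero]
      exact_mod_cast (by lia : #V ≠ #S)
    rw [ih hS] at hrec
    rw [card_insert_of_notMem ha, fallingRatio_succ]
    field_simp
    linear_combination hrec

theorem SwapInvariant.dotProduct_momentMatrix_mulVec {v : smallSubsets V d → ℝ}
    (hv : SwapInvariant v) (hd : 2 * d ≤ #V) (k : ℝ) :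
    v ⬝ᵥ momentMatrix V d k *ᵥ v =
      (momentMatrix V d k *ᵥ v) ⟨∅, empty_mem_smallSubsets V d⟩ ^ 2 := by
  set m := (momentMatrix V d k *ᵥ v) ⟨∅, empty_mem_smallSubsets V d⟩ with hm
  calc v ⬝ᵥ momentMatrix V d k *ᵥ v
      = (∑ S : smallSubsets V d, fallingRatio #V k #S.1 * v S) * m := by
        rw [dotProduct, sum_mul]
        exact sum_congr rfl fun S _ => by rw [hv.momentMatrix_mulVec_apply hd]; ring
    _ = m ^ 2 := by
        rw [sq, hm, mulVec, dotProduct]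
        simp only [momentMatrix_apply, empty_union]

theorem posSemidef_of_swapInvariant (k : ℝ) (hd : 2 * d ≤ #V)
    (h : ∀ μ : ℝ, μ < 0 → ∀ v, momentMatrix V d k *ᵥ v = μ • v → SwapInvariant v) :
    (momentMatrix V d k).PosSemidef := by
  refine posSemidef_of_neg_eigenvector_eq_zero (momentMatrix_isHermitian V d k) fun μ hμ v hv =>
    eq_zero_of_mulVec_eq_neg_smul hμ hv ?_
  rw [(h μ hμ v hv).dotProduct_momentMatrix_mulVec hd]
  exact sq_nonneg _

theorem swapInvariant_of_mulVec_eq_neg_smul {k : ℝ} (hk : 0 ≤ k) (hkV : k ≤ #V)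
    (hpsd : ∀ a ∈ V, ∀ b ∈ V, a ≠ b → (momentMatrix (V \ {a, b}) d (k - 1)).PosSemidef) {μ : ℝ}
    (hμ : μ < 0) {v : smallSubsets V (d + 1) → ℝ}
    (hv : momentMatrix V (d + 1) k *ᵥ v = μ • v) : SwapInvariant v := by
  intro a ha b hb
  obtain rfl | hab := eq_or_ne a b
  · exact funext fun S => congrArg v (Subtype.ext (map_swap_eq_self Iff.rfl))
  refine comp_equiv_eq_self_of_mulVec_eq_neg_smul (momentMatrix_submatrix_swap ha hb k) hμ hv ?_
  have hV : (1 : ℝ) ≤ #V := by exact_mod_cast card_pos.2 ⟨a, ha⟩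
  have hcoeff : 0 ≤ 2 * (k * (#V - k) / (#V * (#V - 1))) :=
    mul_nonneg zero_le_two (div_nonneg (mul_nonneg hk (by linarith))
      (mul_nonneg (by linarith) (by linarith)))
  rw [dotProduct_momentMatrix_mulVec_of_swap_eq_neg ha hb hab]
  · exact mul_nonneg hcoeff ((hpsd a ha b hb hab).dotProduct_mulVec_nonneg _)
  · intro S
    simp [swapSmallSubsets_involutive ha hb S]

theorem posSemidef_momentMatrix (V : Finset α) (k : ℝ) (hd : 2 * d ≤ #V) (hk : (d : ℝ) ≤ k + 1)
    (hkV : k + d ≤ #V + 1) : (momentMatrix V d k).PosSemidef := by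
  induction d generalizing V k with
  | zero =>
    refine posSemidef_of_swapInvariant k hd fun μ _ v _ a ha b hb =>
      funext fun S => congrArg v (Subtype.ext (map_swap_eq_self ?_))
    rw [card_eq_zero.1 (Nat.le_zero.1 (mem_smallSubsets.1 S.2).2)]
    simp
  | succ d ih =>
    push_cast at hk hkV
    refine posSemidef_of_swapInvariant k hd fun μ hμ v =>
      swapInvariant_of_mulVec_eq_neg_smul (by linarith) (by linarith) (fun a ha b hb hab => ?_) hμ
    have hcard := cast_card_sdiff_pair ha hb hab
    refine ih _ _ ?_ (by linarith) (by linarith)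
    rify at hd ⊢
    linarith

end MomentMatrix

section PseudoExpectation

variable {σ : Type*} [Fintype σ]

/-- The pseudo-expectation of the knapsack equation `∑ x_i = k`: every monomial is sent to the value
prescribed by the set of variables occurring in it, since `x_i ^ 2 = x_i` on `0/1` points. -/
noncomputable def pseudoExpectation (σ : Type*) [Fintype σ] (k : ℝ) : MvPolynomial σ ℝ →ₗ[ℝ] ℝ :=
  (basisMonomials σ ℝ).constr ℝ fun s => fallingRatio (Fintype.card σ) k #s.support

theorem pseudoExpectation_monomial (k : ℝ) (s : σ →₀ ℕ) (a : ℝ) :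
    pseudoExpectation σ k (monomial s a) = a * fallingRatio (Fintype.card σ) k #s.support := by
  have hs : monomial s a = a • basisMonomials σ ℝ s := by simp [smul_monomial]
  rw [hs, map_smul, pseudoExpectation, Module.Basis.constr_basis, smul_eq_mul]

theorem pseudoExpectation_one (k : ℝ) : pseudoExpectation σ k 1 = 1 := by
  rw [← C_1, C_apply, pseudoExpectation_monomial]
  simp

theorem pseudoExpectation_mul_X_sq_sub_X (k : ℝ) (f : MvPolynomial σ ℝ) (i : σ) :
    pseudoExpectation σ k (f * (X i ^ 2 - X i)) = 0 := by
  classical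
  induction f using MvPolynomial.induction_on' with
  | monomial s a =>
    rw [mul_sub, map_sub, X_pow_eq_monomial, X, monomial_mul, monomial_mul,
      pseudoExpectation_monomial, pseudoExpectation_monomial, Finsupp.support_add_eq_union,
      Finsupp.support_add_eq_union, Finsupp.support_single _ two_ne_zero,
      Finsupp.support_single _ one_ne_zero, sub_self]
  | add p q hp hq => rw [add_mul, map_add, hp, hq, add_zero]

theorem card_support_le_totalDegree {R τ : Type*} [CommSemiring R] {f : MvPolynomial τ R}
    {s : τ →₀ ℕ} (hs : s ∈ f.support) : #s.support ≤ f.totalDegree := by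
  refine le_trans ?_ (le_totalDegree hs)
  rw [card_eq_sum_ones]
  exact sum_le_sum fun i hi => Nat.one_le_iff_ne_zero.2 (Finsupp.mem_support_iff.1 hi)

theorem pseudoExpectation_mul_sum_X_sub_C (k : ℝ) {f : MvPolynomial σ ℝ}
    (hf : f.totalDegree < Fintype.card σ) :
    pseudoExpectation σ k (f * ((∑ i, X i) - C k)) = 0 := by
  classical
  conv_lhs => rw [f.as_sum]
  rw [sum_mul, map_sum]
  refine sum_eq_zero fun s hs => ?_
  have hX : ∀ i, pseudoExpectation σ k (monomial s (coeff s f) * X i) =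
      coeff s f * fallingRatio (Fintype.card σ) k #(insert i s.support) := fun i => by
    rw [X, monomial_mul, pseudoExpectation_monomial, Finsupp.support_add_eq_union,
      Finsupp.support_single _ one_ne_zero, union_comm, ← insert_eq, mul_one]
  have hssub : s.support ⊂ univ := ssubset_univ_iff.2 fun h =>
    ((card_support_le_totalDegree hs).trans_lt hf).ne ((card_eq_iff_eq_univ _).2 h)
  have hsum := sum_fallingRatio_card_insert hssub k
  rw [card_univ] at hsum
  rw [mul_sub, mul_sum, map_sub, map_sum, sum_congr rfl fun i _ => hX i, ← mul_sum, hsum,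
    mul_comm (monomial s _), C_mul_monomial, pseudoExpectation_monomial]
  ring

theorem pseudoExpectation_sq_nonneg {k : ℝ} {g : MvPolynomial σ ℝ}
    (hg : 2 * g.totalDegree ≤ Fintype.card σ) (hk : (g.totalDegree : ℝ) ≤ k + 1)
    (hkn : k + g.totalDegree ≤ Fintype.card σ + 1) : 0 ≤ pseudoExpectation σ k (g ^ 2) := by
  classical
  let φ : g.support → smallSubsets (univ : Finset σ) g.totalDegree := fun s =>
    ⟨s.1.support, mem_smallSubsets.2 ⟨subset_univ _, card_support_le_totalDegree s.2⟩⟩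
  have hpsd := (posSemidef_momentMatrix univ k hg hk hkn).submatrix φ
  refine (hpsd.dotProduct_mulVec_nonneg fun s => coeff s.1 g).trans_eq ?_
  conv_rhs => rw [sq, g.as_sum, sum_mul_sum, map_sum, ← sum_coe_sort]
  refine sum_congr rfl fun s _ => ?_
  rw [map_sum, ← sum_coe_sort, star_trivial, Matrix.mulVec, dotProduct, mul_sum]
  refine sum_congr rfl fun t _ => ?_
  rw [monomial_mul, pseudoExpectation_monomial, Finsupp.support_add_eq_union,
    Matrix.submatrix_apply, momentMatrix_apply, card_univ]
  ring

end PseudoExpectation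

theorem knapsack_degree_sos_lower_bound_general {σ ι : Type*} [Fintype σ] [Fintype ι] {k : ℝ}
    (hk0 : 0 ≤ k) (hkn : k ≤ Fintype.card σ) (f : σ → MvPolynomial σ ℝ) {f0 : MvPolynomial σ ℝ}
    {g : ι → MvPolynomial σ ℝ} (hf0 : f0.totalDegree < Fintype.card σ)
    (hg : ∀ j, 2 * (g j).totalDegree ≤
      min (2 * (⌊min k ((Fintype.card σ : ℝ) - k)⌋).toNat + 3) (Fintype.card σ)) :
    (-1 : MvPolynomial σ ℝ) ≠
      (∑ i, f i * (X i ^ 2 - X i)) + f0 * ((∑ i, X i) - C k) + ∑ j, (g j) ^ 2 := by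
  intro heq
  have hmin : 0 ≤ min k (Fintype.card σ - k) := le_min hk0 (sub_nonneg.2 hkn)
  have hfloor : (⌊min k (Fintype.card σ - k)⌋.toNat : ℝ) ≤ min k (Fintype.card σ - k) :=
    Nat.floor_le hmin
  obtain ⟨hrk, hrn⟩ := le_min_iff.1 hfloor
  have hsq : ∀ j, 0 ≤ pseudoExpectation σ k (g j ^ 2) := fun j => by
    obtain ⟨hr, hn⟩ := le_min_iff.1 (hg j)
    have hdeg : ((g j).totalDegree : ℝ) ≤ ⌊min k (Fintype.card σ - k)⌋.toNat + 1 := by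
      exact_mod_cast (by lia : (g j).totalDegree ≤ ⌊min k (Fintype.card σ - k)⌋.toNat + 1)
    exact pseudoExpectation_sq_nonneg hn (by linarith) (by linarith)
  have himage := congrArg (pseudoExpectation σ k) heq
  simp only [map_neg, map_add, map_sum, pseudoExpectation_one, pseudoExpectation_mul_X_sq_sub_X,
    pseudoExpectation_mul_sum_X_sub_C k hf0, sum_const_zero, zero_add] at himage
  linarith [sum_nonneg fun j (_ : j ∈ univ) => hsq j]

theorem knapsack_degree_sos_lower_bound (n : ℕ) (hn : 0 < n) (k : ℝ)
    (hk0 : 0 ≤ k) (hkn : k ≤ n) (hknotint : ∀ z : ℤ, k ≠ z) :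
    ¬ ∃ (f : Fin n → MvPolynomial (Fin n) ℝ) (f0 : MvPolynomial (Fin n) ℝ)
        (m : ℕ) (g : Fin m → MvPolynomial (Fin n) ℝ),
      (∀ i, (f i).totalDegree ≤ min (2 * (⌊min k ((n : ℝ) - k)⌋).toNat + 3) n - 2) ∧
      f0.totalDegree ≤ min (2 * (⌊min k ((n : ℝ) - k)⌋).toNat + 3) n - 1 ∧
      (∀ j, 2 * (g j).totalDegree ≤ min (2 * (⌊min k ((n : ℝ) - k)⌋).toNat + 3) n) ∧
      (-1 : MvPolynomial (Fin n) ℝ) =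
        (∑ i, f i * (X i ^ 2 - X i)) + f0 * ((∑ i, X i) - C k) +
        ∑ j, (g j) ^ 2 := by
  rintro ⟨f, f0, m, g, -, hf0, hg, heq⟩
  exact knapsack_degree_sos_lower_bound_general hk0 (by simpa) f (by simp; lia)
    (fun j => by simpa using hg j) heq
end

section
/- Let G be a simple graph on n ≥ 2 vertices with m edges and let ρ = m / C(n,2) be its edge density. Then the number of triangles (3-cliques) of G is at least C(n,3) − (n(n−1)(1−ρ)/6)·((1+2ρ)n − 2 − 2ρ). -/
open Finset

/-!
Two adjacent vertices `u`, `v` have at least `deg u + deg v - n` common neighbours, each of which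
closes a triangle with the edge `uv`. Summing over ordered pairs of adjacent vertices counts every
triangle six times and every `deg v` exactly `2 deg v` times, so `2 ∑ deg² ≤ 6t + 2mn`.
Cauchy–Schwarz bounds `∑ deg²` below by `(2m)² / n`, whence `t ≥ m (4m - n²) / (3n)`; this is
the bound in terms of the edge density.
-/

section Degrees

variable {V : Type*} [Fintype V] (G : SimpleGraph V) [DecidableRel G.Adj]

lemma sum_dart_fst_eq_sum_degree_nsmul {M : Type*} [AddCommMonoid M] (f : V → M) :
    ∑ d : G.Dart, f d.fst = ∑ v, G.degree v • f v := by
  classical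
  rw [← Fintype.sum_fiberwise' (fun d : G.Dart => d.fst) f]
  refine sum_congr rfl fun v _ => ?_
  rw [sum_const, card_univ, Fintype.card_subtype, G.dart_fst_fiber_card_eq_degree]

lemma sum_dart_snd_eq_sum_dart_fst {M : Type*} [AddCommMonoid M] (f : V → M) :
    ∑ d : G.Dart, f d.snd = ∑ d : G.Dart, f d.fst :=
  Equiv.sum_comp SimpleGraph.Dart.symm_involutive.toPerm fun d : G.Dart => f d.fst

lemma sum_dart_degree_add_degree :
    ∑ d : G.Dart, (G.degree d.fst + G.degree d.snd) = 2 * ∑ v, G.degree v ^ 2 := by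
  rw [sum_add_distrib, sum_dart_snd_eq_sum_dart_fst G fun v => G.degree v,
    sum_dart_fst_eq_sum_degree_nsmul G fun v => G.degree v, ← two_mul]
  simp only [smul_eq_mul, sq]

lemma four_mul_card_edgeFinset_sq_le_card_mul_sum_degree_sq :
    4 * #G.edgeFinset ^ 2 ≤ Fintype.card V * ∑ v, G.degree v ^ 2 := by
  calc 4 * #G.edgeFinset ^ 2
      = (∑ v, G.degree v) ^ 2 := by rw [G.sum_degrees_eq_twice_card_edges]; ring
    _ ≤ Fintype.card V * ∑ v, G.degree v ^ 2 := sq_sum_le_card_mul_sum_sq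

end Degrees

section Cliques

variable {V : Type*} [Fintype V] [DecidableEq V] {G : SimpleGraph V} [DecidableRel G.Adj]

lemma card_darts_of_isClique {s : Finset V} (hs : G.IsClique s) :
    #{d : G.Dart | d.fst ∈ s ∧ d.snd ∈ s} = #s * #s - #s := by
  rw [← offDiag_card]
  refine card_nbij SimpleGraph.Dart.toProd ?_ SimpleGraph.Dart.toProd_injective.injOn ?_
  · intro d hd
    obtain ⟨h₁, h₂⟩ := (mem_filter.1 hd).2
    exact mem_offDiag.2 ⟨h₁, h₂, d.fst_ne_snd⟩
  · intro p hp
    obtain ⟨h₁, h₂, hne⟩ := mem_offDiag.1 hp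
    exact ⟨⟨p, hs h₁ h₂ hne⟩, by simp [h₁, h₂], rfl⟩

lemma sum_dart_card_cliqueFinset_filter (G : SimpleGraph V) [DecidableRel G.Adj] (r : ℕ) :
    ∑ d : G.Dart, #{s ∈ G.cliqueFinset r | d.fst ∈ s ∧ d.snd ∈ s} =
      #(G.cliqueFinset r) * (r * r - r) := by
  calc ∑ d : G.Dart, #{s ∈ G.cliqueFinset r | d.fst ∈ s ∧ d.snd ∈ s}
      = ∑ s ∈ G.cliqueFinset r, #{d : G.Dart | d.fst ∈ s ∧ d.snd ∈ s} :=
        sum_card_bipartiteAbove_eq_sum_card_bipartiteBelow _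
    _ = #(G.cliqueFinset r) * (r * r - r) := by
        refine sum_const_nat fun s hs => ?_
        have hclique := SimpleGraph.mem_cliqueFinset_iff.1 hs
        rw [card_darts_of_isClique hclique.isClique, hclique.card_eq]

lemma card_inter_neighborFinset_of_adj {u v : V} (huv : G.Adj u v) :
    #(G.neighborFinset u ∩ G.neighborFinset v) = #{s ∈ G.cliqueFinset 3 | u ∈ s ∧ v ∈ s} := by
  refine card_nbij (fun w => {u, v, w}) ?_ ?_ ?_
  · intro w hw
    simp_all [SimpleGraph.is3Clique_triple_iff]
  · intro w hw w' _ h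
    have hmem : w ∈ ({u, v, w'} : Finset V) := (Finset.ext_iff.1 h w).1 (by simp)
    simp only [coe_inter, Set.mem_inter_iff, mem_coe, SimpleGraph.mem_neighborFinset] at hw
    simpa [hw.1.ne', hw.2.ne'] using hmem
  · intro s hs
    obtain ⟨hs, hu, hv⟩ := mem_filter.1 hs
    rw [SimpleGraph.mem_cliqueFinset_iff] at hs
    obtain ⟨w, hw⟩ : ∃ w, (s.erase u).erase v = {w} := by
      rw [← card_eq_one, card_erase_of_mem (mem_erase.2 ⟨huv.ne', hv⟩), card_erase_of_mem hu,
        hs.card_eq]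
    have hs_eq : {u, v, w} = s := by
      rw [← hw, insert_erase (mem_erase.2 ⟨huv.ne', hv⟩), insert_erase hu]
    obtain ⟨-, huw, hvw⟩ := SimpleGraph.is3Clique_triple_iff.1 (hs_eq ▸ hs)
    exact ⟨w, by simp [huw, hvw], hs_eq⟩

lemma sum_dart_card_inter_neighborFinset (G : SimpleGraph V) [DecidableRel G.Adj] :
    ∑ d : G.Dart, #(G.neighborFinset d.fst ∩ G.neighborFinset d.snd) =
      6 * #(G.cliqueFinset 3) := by
  rw [sum_congr rfl fun d _ => card_inter_neighborFinset_of_adj d.adj,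
    sum_dart_card_cliqueFinset_filter, mul_comm]

end Cliques

section Goodman

variable {V : Type*} [Fintype V] [DecidableEq V] (G : SimpleGraph V) [DecidableRel G.Adj]

lemma degree_add_degree_le_card_inter_add_card (u v : V) :
    G.degree u + G.degree v ≤ #(G.neighborFinset u ∩ G.neighborFinset v) + Fintype.card V := by
  rw [← G.card_neighborFinset_eq_degree, ← G.card_neighborFinset_eq_degree,
    ← card_inter_add_card_union]
  gcongr
  exact card_le_univ _

lemma two_mul_sum_degree_sq_le :
    2 * ∑ v, G.degree v ^ 2 ≤
      6 * #(G.cliqueFinset 3) + 2 * #G.edgeFinset * Fintype.card V := by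
  calc 2 * ∑ v, G.degree v ^ 2
      = ∑ d : G.Dart, (G.degree d.fst + G.degree d.snd) := (sum_dart_degree_add_degree G).symm
    _ ≤ ∑ d : G.Dart,
          (#(G.neighborFinset d.fst ∩ G.neighborFinset d.snd) + Fintype.card V) :=
        sum_le_sum fun d _ => degree_add_degree_le_card_inter_add_card G d.fst d.snd
    _ = 6 * #(G.cliqueFinset 3) + 2 * #G.edgeFinset * Fintype.card V := by
        rw [sum_add_distrib, sum_dart_card_inter_neighborFinset, sum_const, card_univ,
          G.dart_card_eq_twice_card_edges, smul_eq_mul]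

lemma four_mul_card_edgeFinset_sq_le :
    4 * #G.edgeFinset ^ 2 ≤
      Fintype.card V * (3 * #(G.cliqueFinset 3) + #G.edgeFinset * Fintype.card V) := by
  refine (four_mul_card_edgeFinset_sq_le_card_mul_sum_degree_sq G).trans ?_
  gcongr
  linarith [two_mul_sum_degree_sq_le G]

end Goodman

lemma cast_choose_three {K : Type*} [Field K] [CharZero K] (n : ℕ) :
    (n.choose 3 : K) = n * (n - 1) * (n - 2) / 6 := by
  rw [Nat.cast_choose_eq_descPochhammer_div]
  simp [descPochhammer_succ_right, Nat.factorial]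

lemma goodman_density_identity {K : Type*} [Field K] [CharZero K] {n : ℕ} (hn : n ≠ 0)
    {m ρ : K} (hm : m = ρ * n.choose 2) :
    n.choose 3 - (n * (n - 1) * (1 - ρ) / 6) * ((1 + 2 * ρ) * n - 2 - 2 * ρ) =
      m * (4 * m - n ^ 2) / (3 * n) := by
  have hn' : (n : K) ≠ 0 := Nat.cast_ne_zero.2 hn
  rw [hm, cast_choose_three, Nat.cast_choose_two]
  field_simp
  ring

theorem goodman_bound_general {V : Type*} [Fintype V] [DecidableEq V] (n : ℕ) (hn : 2 ≤ n)
    (hV : Fintype.card V = n) (G : SimpleGraph V) [DecidableRel G.Adj] (m ρ : ℝ)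
    (hm : m = (#G.edgeFinset : ℝ)) (hρ : ρ = m / (n.choose 2 : ℝ)) :
    (#(G.cliqueFinset 3) : ℝ) ≥
      (n.choose 3 : ℝ) -
        ((n : ℝ) * ((n : ℝ) - 1) * (1 - ρ) / 6) * ((1 + 2 * ρ) * (n : ℝ) - 2 - 2 * ρ) := by
  have hchoose : (n.choose 2 : ℝ) ≠ 0 := Nat.cast_ne_zero.2 (Nat.choose_pos hn).ne'
  have hcount : 4 * m ^ 2 ≤ n * (3 * #(G.cliqueFinset 3) + m * n) := by
    rw [hm, ← hV]
    exact_mod_cast four_mul_card_edgeFinset_sq_le G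
  rw [goodman_density_identity (by lia) ((eq_div_iff hchoose).1 hρ).symm, ge_iff_le,
    div_le_iff₀ (by positivity)]
  linarith

theorem goodman_bound (n : ℕ) (hn : 2 ≤ n) (G : SimpleGraph (Fin n))
    [DecidableRel G.Adj] (m ρ : ℝ) (hm : m = (G.edgeFinset.card : ℝ))
    (hρ : ρ = m / (n.choose 2 : ℝ)) :
    ((G.cliqueFinset 3).card : ℝ) ≥
      (n.choose 3 : ℝ) -
        ((n : ℝ) * ((n : ℝ) - 1) * (1 - ρ) / 6) * ((1 + 2 * ρ) * (n : ℝ) - 2 - 2 * ρ) :=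
  goodman_bound_general n hn (Fintype.card_fin n) G m ρ hm hρ
end

section
/- Let G be a simple graph on n vertices with m edges, let N_{3,3} be its number of triangles, let N_{3,1} be the number of 3-element vertex sets inducing exactly one edge, and for each vertex i let P_i be the number of unordered pairs {j,k} of vertices distinct from i such that neither {i,j} nor {i,k} is an edge of G. Then N_{3,3} = C(n,3) − (n−2)·(C(n,2) − m) + (2/3)·Σ_{i} P_i + N_{3,1}/3. -/
open Finset

/-- The number of edges of `G` inside the vertex set `S`. -/
def edgesIn {n : ℕ} (G : SimpleGraph (Fin n)) [DecidableRel G.Adj]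
    (S : Finset (Fin n)) : ℕ :=
  (G.edgeFinset.filter (· ∈ S.sym2)).card

/-- `N3 G t` is the number of 3-element vertex sets whose induced subgraph has
exactly `t` edges. -/
def N3 {n : ℕ} (G : SimpleGraph (Fin n)) [DecidableRel G.Adj] (t : ℕ) : ℕ :=
  (univ.filter fun S : Finset (Fin n) => S.card = 3 ∧ edgesIn G S = t).card

/-- `P G i` is the number of unordered pairs `{j,k}` of vertices distinct from `i` such
that neither `{i,j}` nor `{i,k}` is an edge of `G`. -/
def P {n : ℕ} (G : SimpleGraph (Fin n)) [DecidableRel G.Adj] (i : Fin n) : ℕ :=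
  (univ.filter fun p : Finset (Fin n) =>
    p.card = 2 ∧ i ∉ p ∧ ∀ j ∈ p, ¬ G.Adj i j).card

/-!
Let `N t` be the number of vertex triples inducing exactly `t` edges, so that
`N 0 + N 1 + N 2 + N 3 = C(n, 3)`. Two double counts give two further relations. Each edge lies in
`n - 2` triples, so `N 1 + 2 N 2 + 3 N 3 = (n - 2) m`. Adjoining `i` to a pair counted by `P i`
gives a triple in which `i` is isolated; a triple has `3`, `1`, `0`, `0` isolated vertices according
as it induces `0`, `1`, `2`, `3` edges, so `∑ P i = 3 N 0 + N 1`. Eliminating `N 0` and `N 2`, and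
using `3 C(n, 3) = (n - 2) C(n, 2)`, gives the identity.
-/

variable {V : Type*}

/-- The vertices of `S` that are isolated in the subgraph of `G` induced on `S`. -/
def isolatedWithin (G : SimpleGraph V) [DecidableRel G.Adj] (S : Finset V) : Finset V :=
  {i ∈ S | ∀ j ∈ S, ¬G.Adj i j}

theorem mem_isolatedWithin {G : SimpleGraph V} [DecidableRel G.Adj] {S : Finset V} {i : V} :
    i ∈ isolatedWithin G S ↔ i ∈ S ∧ ∀ j ∈ S, ¬G.Adj i j :=
  mem_filter

variable [Fintype V] [DecidableEq V] (G : SimpleGraph V) [DecidableRel G.Adj]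

/-- The edges of the subgraph of `G` induced on `S`, as unordered pairs of vertices of `G`;
`edgesIn` is the number of these when the vertex type is `Fin n`. -/
def edgesWithin (S : Finset V) : Finset (Sym2 V) :=
  {e ∈ G.edgeFinset | e ∈ S.sym2}

/-- The `k`-element vertex sets inducing exactly `t` edges, counted by the paper's `N_{k,t}`. -/
def setsInducing (k t : ℕ) : Finset (Finset V) :=
  {S | #S = k ∧ #(edgesWithin G S) = t}

/-- The `k`-element sets of non-neighbours of `i` other than `i` itself; the paper's `P_i` is the
number of these for `k = 2`. -/
def nonadjSets (i : V) (k : ℕ) : Finset (Finset V) :=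
  {p | #p = k ∧ i ∉ p ∧ ∀ j ∈ p, ¬G.Adj i j}

variable {G} in
theorem mem_nonadjSets {i : V} {k : ℕ} {p : Finset V} :
    p ∈ nonadjSets G i k ↔ #p = k ∧ i ∉ p ∧ ∀ j ∈ p, ¬G.Adj i j :=
  mem_filter_univ _

theorem card_edgesWithin_le_choose_two (S : Finset V) :
    #(edgesWithin G S) ≤ (#S).choose 2 := by
  have h : #(edgesWithin G S) = #(G.induce (S : Set V)).edgeFinset := by
    rw [← G.card_filter_edgeFinset_toFinset_subset, G.filter_edgeFinset_toFinset_subset,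
      edgesWithin, filter_mem_eq_inter]
  simpa [h] using (G.induce (S : Set V)).card_edgeFinset_le_card_choose_two

@[simp]
theorem edgesWithin_singleton (a : V) : edgesWithin G {a} = ∅ := by
  refine filter_eq_empty_iff.2 fun e he hea => ?_
  rw [sym2_singleton, mem_singleton] at hea
  exact G.not_isDiag_of_mem_edgeFinset he (hea ▸ Sym2.diag_isDiag a)

theorem edgesWithin_insert (a : V) (S : Finset V) :
    edgesWithin G (insert a S) = edgesWithin G S ∪ {b ∈ S | G.Adj a b}.image (s(a, ·)) := by
  ext e
  induction e with
  | _ x y =>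
    simp only [edgesWithin, mem_filter, SimpleGraph.mem_edgeFinset, SimpleGraph.mem_edgeSet,
      mk_mem_sym2_iff, mem_insert, mem_union, mem_image, Sym2.eq_iff]
    have hne := G.ne_of_adj (a := x) (b := y)
    have hcomm := G.adj_comm x y
    grind

theorem card_edgesWithin_insert {a : V} {S : Finset V} (ha : a ∉ S) :
    #(edgesWithin G (insert a S)) = #(edgesWithin G S) + #{b ∈ S | G.Adj a b} := by
  have hdisj : Disjoint (edgesWithin G S) ({b ∈ S | G.Adj a b}.image (s(a, ·))) := by
    simp only [disjoint_left, edgesWithin, mem_filter, mem_image]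
    rintro _ ⟨-, he⟩ ⟨b, -, rfl⟩
    exact ha (mk_mem_sym2_iff.1 he).1
  rw [edgesWithin_insert, card_union_of_disjoint hdisj,
    card_image_of_injective _ fun _ _ => Sym2.congr_right.1]

theorem card_isolatedWithin_of_card_eq_three {S : Finset V} (hS : #S = 3) :
    #(isolatedWithin G S) =
      if #(edgesWithin G S) = 0 then 3 else if #(edgesWithin G S) = 1 then 1 else 0 := by
  obtain ⟨a, b, c, hab, hac, hbc, rfl⟩ := card_eq_three.1 hS
  rw [card_edgesWithin_insert G (by simp [hab, hac] : a ∉ {b, c}),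
    card_edgesWithin_insert G (by simp [hbc] : b ∉ {c}), edgesWithin_singleton]
  simp only [isolatedWithin, filter_insert, filter_singleton, forall_mem_insert, mem_singleton,
    forall_eq, SimpleGraph.irrefl, G.adj_comm b a, G.adj_comm c a, G.adj_comm c b]
  by_cases G.Adj a b <;> by_cases G.Adj a c <;> by_cases G.Adj b c <;> simp [*]

theorem sum_comp_card_edgesWithin {M : Type*} [AddCommMonoid M] (k : ℕ) (f : ℕ → M) :
    ∑ S ∈ powersetCard k univ, f #(edgesWithin G S) =
      ∑ t ∈ range (k.choose 2 + 1), #(setsInducing G k t) • f t := by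
  have hmaps : ∀ S ∈ powersetCard k (univ : Finset V),
      #(edgesWithin G S) ∈ range (k.choose 2 + 1) := fun S hS => by
    rw [mem_range, Nat.lt_succ_iff, ← mem_powersetCard_univ.1 hS]
    exact card_edgesWithin_le_choose_two G S
  rw [← sum_fiberwise_of_maps_to' hmaps]
  refine sum_congr rfl fun t _ => ?_
  rw [sum_const, setsInducing, ← filter_filter, univ_filter_card_eq]

theorem sum_card_edgesWithin {k : ℕ} (hk : 2 ≤ k) :
    ∑ S ∈ powersetCard k univ, #(edgesWithin G S) =
      #G.edgeFinset * (Fintype.card V - 2).choose (k - 2) := by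
  have hedge : ∀ e ∈ G.edgeFinset, #{S ∈ powersetCard k univ | e ∈ S.sym2} =
      (Fintype.card V - 2).choose (k - 2) := fun e he => by
    have hcard : #e.toFinset = 2 := G.card_toFinset_mem_edgeFinset ⟨e, he⟩
    have h := card_filter_powersetCard_subset e.toFinset univ k (subset_univ _) (hcard ▸ hk)
    simpa only [subset_iff, Sym2.mem_toFinset, ← mem_sym2_iff, hcard, card_univ] using h
  calc ∑ S ∈ powersetCard k univ, #(edgesWithin G S)
      = ∑ e ∈ G.edgeFinset, #{S ∈ powersetCard k univ | e ∈ S.sym2} :=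
        sum_card_bipartiteAbove_eq_sum_card_bipartiteBelow _
    _ = #G.edgeFinset * (Fintype.card V - 2).choose (k - 2) := by
        rw [sum_congr rfl hedge, sum_const, smul_eq_mul]

theorem card_nonadjSets (i : V) (k : ℕ) :
    #(nonadjSets G i k) = #{S ∈ powersetCard (k + 1) univ | i ∈ isolatedWithin G S} := by
  refine card_nbij' (insert i) (·.erase i) ?_ ?_ ?_ ?_
  · intro p hp
    obtain ⟨hcard, hi, hadj⟩ := mem_nonadjSets.1 hp
    simpa [mem_isolatedWithin, card_insert_of_notMem hi, hcard] using hadj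
  · intro S hS
    obtain ⟨hS, hiso⟩ := mem_filter.1 hS
    obtain ⟨hi, hadj⟩ := mem_isolatedWithin.1 hiso
    simpa [mem_nonadjSets, card_erase_of_mem hi, mem_powersetCard_univ.1 hS] using
      fun j _ => hadj j
  · exact fun p hp => erase_insert (mem_nonadjSets.1 hp).2.1
  · exact fun S hS => insert_erase (mem_isolatedWithin.1 (mem_filter.1 hS).2).1

theorem sum_card_nonadjSets (k : ℕ) :
    ∑ i, #(nonadjSets G i k) = ∑ S ∈ powersetCard (k + 1) univ, #(isolatedWithin G S) := by
  calc ∑ i, #(nonadjSets G i k)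
      = ∑ i, #{S ∈ powersetCard (k + 1) univ | i ∈ isolatedWithin G S} :=
        sum_congr rfl fun i _ => card_nonadjSets G i k
    _ = ∑ S ∈ powersetCard (k + 1) univ, #{i | i ∈ isolatedWithin G S} :=
        sum_card_bipartiteAbove_eq_sum_card_bipartiteBelow _
    _ = ∑ S ∈ powersetCard (k + 1) univ, #(isolatedWithin G S) := by
        simp only [filter_univ_mem]

theorem sum_card_setsInducing_three :
    #(setsInducing G 3 0) + #(setsInducing G 3 1) + #(setsInducing G 3 2) + #(setsInducing G 3 3) =
      (Fintype.card V).choose 3 := by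
  simpa [sum_range_succ] using (sum_comp_card_edgesWithin G 3 fun _ => (1 : ℕ)).symm

theorem sum_mul_card_setsInducing_three :
    #(setsInducing G 3 1) + 2 * #(setsInducing G 3 2) + 3 * #(setsInducing G 3 3) =
      #G.edgeFinset * (Fintype.card V - 2) := by
  have h := (sum_comp_card_edgesWithin G 3 id).symm.trans (sum_card_edgesWithin G (by simp))
  simpa [sum_range_succ, mul_comm] using h

theorem sum_card_nonadjSets_two :
    ∑ i, #(nonadjSets G i 2) = 3 * #(setsInducing G 3 0) + #(setsInducing G 3 1) := by
  rw [sum_card_nonadjSets, sum_congr rfl fun S hS =>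
    card_isolatedWithin_of_card_eq_three G (mem_powersetCard_univ.1 hS),
    sum_comp_card_edgesWithin G 3 fun t => if t = 0 then 3 else if t = 1 then 1 else 0]
  simp [sum_range_succ, mul_comm]

theorem cast_mul_tsub_two_of_le_choose_two {R : Type*} [Ring R] {n x : ℕ} (hx : x ≤ n.choose 2) :
    ((x * (n - 2) : ℕ) : R) = x * ((n : R) - 2) := by
  rcases le_or_gt 2 n with hn | hn
  · simp [Nat.cast_sub hn]
  · simp [Nat.le_zero.1 (Nat.choose_eq_zero_of_lt hn ▸ hx)]

theorem triangle_count_identity_general {K : Type*} [Field K] (h3 : (3 : K) ≠ 0) :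
    (#(setsInducing G 3 3) : K) =
      ((Fintype.card V).choose 3 : K) -
          ((Fintype.card V : K) - 2) * (((Fintype.card V).choose 2 : K) - (#G.edgeFinset : K)) +
        (2 / 3) * (∑ i, (#(nonadjSets G i 2) : K)) + (#(setsInducing G 3 1) : K) / 3 := by
  have htriples := congrArg (Nat.cast (R := K)) (sum_card_setsInducing_three G)
  have hedges := congrArg (Nat.cast (R := K)) (sum_mul_card_setsInducing_three G)
  have hpairs := congrArg (Nat.cast (R := K)) (sum_card_nonadjSets_two G)
  have hchoose := congrArg (Nat.cast (R := K)) (Nat.choose_succ_right_eq (Fintype.card V) 2)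
  rw [cast_mul_tsub_two_of_le_choose_two G.card_edgeFinset_le_card_choose_two] at hedges
  rw [cast_mul_tsub_two_of_le_choose_two le_rfl] at hchoose
  push_cast at htriples hedges hpairs hchoose
  field_simp
  linear_combination 3 * hedges - 6 * htriples - 2 * hpairs - 3 * hchoose

theorem triangle_count_identity (n : ℕ) (G : SimpleGraph (Fin n))
    [DecidableRel G.Adj] :
    (N3 G 3 : ℝ) =
      (n.choose 3 : ℝ) - ((n : ℝ) - 2) * ((n.choose 2 : ℝ) - (G.edgeFinset.card : ℝ)) +
        (2 / 3) * (∑ i, (P G i : ℝ)) + (N3 G 1 : ℝ) / 3 := by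
  have hN (t : ℕ) : N3 G t = #(setsInducing G 3 t) := rfl
  -- Not `rfl`: the two filters carry different decidability instances.
  have hP (i : Fin n) : P G i = #(nonadjSets G i 2) := by unfold P nonadjSets; congr!
  simpa only [hN, hP, Fintype.card_fin] using
    triangle_count_identity_general G (K := ℝ) three_ne_zero
end

section
/- Let m and z be positive integers and let p ∈ ℝ[α₁, …, α_m] be a polynomial of total degree strictly less than z. Suppose there exist a finite set A₁ ⊆ ℝ with |A₁| ≥ z and, for each 1 ≤ j ≤ m−1, a function A_{j+1} assigning to every tuple (a₁, …, a_j) ∈ ℝʲ a finite set A_{j+1}(a₁, …, a_j) ⊆ ℝ with |A_{j+1}(a₁, …, a_j)| ≥ z, such that p(a₁, …, a_m) = 0 for every tuple (a₁, …, a_m) with a₁ ∈ A₁ and a_{j+1} ∈ A_{j+1}(a₁, …, a_j) for all 1 ≤ j ≤ m−1. Then p is the zero polynomial. -/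
open MvPolynomial Finset

/-!
Substituting for the first variable an element `r` of the first set leaves a polynomial in the
remaining variables that vanishes on the branches of the subtree above `r` and whose degree in each
remaining variable has not grown, so by induction it is zero. Seen as a univariate polynomial in the
first variable, with coefficients in the domain of polynomials in the others, `p` therefore has more
roots than its degree.
-/

/-- The tuples `a` selected by a branching family `A`, in which `A j` sends a prefix of length `j`
to the finite set of its admissible continuations. -/
def IsBranch {α : Type*} {m : ℕ} (A : (j : Fin m) → (Fin j → α) → Finset α) (a : Fin m → α) :
    Prop :=
  ∀ j, a j ∈ A j fun i => a (i.castLE j.isLt.le)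

/-- The branching family that remains once the first coordinate has been fixed to be `r`. -/
def branchingSubtree {α : Type*} {n : ℕ} (A : (j : Fin (n + 1)) → (Fin j → α) → Finset α) (r : α) :
    (j : Fin n) → (Fin j → α) → Finset α :=
  fun j prev => A j.succ (Fin.cons r prev)

theorem IsBranch.cons {α : Type*} {n : ℕ} {A : (j : Fin (n + 1)) → (Fin j → α) → Finset α}
    {r : α} {s : Fin n → α} (hr : r ∈ A 0 Fin.elim0) (hs : IsBranch (branchingSubtree A r) s) :
    IsBranch A (Fin.cons r s) := by
  intro j
  cases j using Fin.cases with
  | zero =>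
    have prefix_nil : (fun i : Fin 0 => (Fin.cons r s : Fin (n + 1) → α)
        (i.castLE n.succ.zero_le)) = Fin.elim0 := by
      ext i
      exact i.elim0
    exact prefix_nil ▸ hr
  | succ j =>
    have prefix_cons : (fun i : Fin (j + 1) => (Fin.cons r s : Fin (n + 1) → α)
        (i.castLE j.succ.isLt.le)) = Fin.cons r fun i => s (i.castLE j.isLt.le) := by
      ext i
      cases i using Fin.cases <;> rfl
    exact prefix_cons ▸ hs j

theorem degreeOf_eval_C_finSuccEquiv_le {R : Type*} [CommSemiring R] {n : ℕ}
    (p : MvPolynomial (Fin (n + 1)) R) (r : R) (j : Fin n) :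
    degreeOf j ((finSuccEquiv R n p).eval (C r)) ≤ degreeOf j.succ p := by
  rw [Polynomial.eval_eq_sum_range]
  refine (degreeOf_sum_le j _ _).trans (Finset.sup_le fun k _ => ?_)
  calc degreeOf j ((finSuccEquiv R n p).coeff k * C r ^ k)
      = degreeOf j (C (r ^ k) * (finSuccEquiv R n p).coeff k) := by rw [← C_pow, mul_comm]
    _ ≤ degreeOf j ((finSuccEquiv R n p).coeff k) := degreeOf_C_mul_le _ _ _
    _ ≤ degreeOf j.succ p := degreeOf_coeff_finSuccEquiv p j k

theorem branching_interpolation_general {R : Type*} [CommRing R] [IsDomain R] {m : ℕ}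
    (p : MvPolynomial (Fin m) R) (A : (j : Fin m) → (Fin j → R) → Finset R)
    (hcard : ∀ (j : Fin m) (prev : Fin j → R),
      IsBranch (fun i => A (i.castLE j.isLt.le)) prev → degreeOf j p < #(A j prev))
    (hvanish : ∀ a, IsBranch A a → eval a p = 0) :
    p = 0 := by
  induction m with
  | zero =>
    rw [eq_C_of_isEmpty p] at hvanish ⊢
    simpa using hvanish Fin.elim0 fun j => j.elim0
  | succ n ih =>
    have hroot : ∀ r ∈ A 0 Fin.elim0, (finSuccEquiv R n p).eval (C r) = 0 := by
      intro r hr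
      refine ih _ (branchingSubtree A r) (fun j prev hprev => ?_) fun s hs => ?_
      · exact (degreeOf_eval_C_finSuccEquiv_le p r j).trans_lt
          (hcard j.succ (Fin.cons r prev) (IsBranch.cons hr hprev))
      · rw [eval_polynomial_eval_finSuccEquiv, eval_C]
        exact hvanish _ (hs.cons hr)
    have hdeg : (finSuccEquiv R n p).natDegree < #(A 0 Fin.elim0) := by
      rw [natDegree_finSuccEquiv]
      exact hcard 0 Fin.elim0 fun j => j.elim0
    apply (finSuccEquiv R n).injective
    rw [map_zero]
    exact Polynomial.eq_zero_of_natDegree_lt_card_of_eval_eq_zero _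
      (f := fun r : A 0 Fin.elim0 => C r.1) ((C_injective _ _).comp Subtype.val_injective)
      (fun r => hroot r r.2) (by simpa only [Fintype.card_coe] using hdeg)

theorem branching_interpolation (m z : ℕ) (hm : 0 < m) (hz : 0 < z)
    (p : MvPolynomial (Fin m) ℝ) (hdeg : p.totalDegree < z)
    (A : (j : Fin m) → ((Fin (j : ℕ)) → ℝ) → Finset ℝ)
    (hcard : ∀ (j : Fin m) (prev : (Fin (j : ℕ)) → ℝ), z ≤ (A j prev).card)
    (hvanish : ∀ a : Fin m → ℝ,
      (∀ j : Fin m, a j ∈ A j (fun i => a (Fin.castLE j.isLt.le i))) →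
      eval a p = 0) :
    p = 0 :=
  branching_interpolation_general p A
    (fun j prev _ => (degreeOf_le_totalDegree p j).trans_lt (hdeg.trans_le (hcard j prev))) hvanish
end

section
/- Let n and r be positive integers with n ≥ 2r. For injective tuples L = (l₁, …, l_r) and L'' = (l''₁, …, l''_r) of elements of {1, …, n}, define c(L, L'') = 0 if there exist indices i ≠ j with l''_j = l_i, and otherwise c(L, L'') = (−1)^z / Π_{j=0}^{z−1}(n − r − j) where z = |{i : l''_i ≠ l_i}|. Then for all injective tuples L and L' of length r and every position i ∈ {1, …, r}: Σ_a c(L, (l'₁, …, l'_{i−1}, a, l'_{i+1}, …, l'_r)) = 0, where the sum is over all a in ({1, …, n} ∖ {l'₁, …, l'_r}) ∪ {l'_i}. -/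
open Finset

/-- The coefficients `c(L, L'')` used in defining the symmetry-adjusted polynomials
`φ_{F,L}`: zero if `L''` hits an entry of `L` at a wrong position, and otherwise
`(−1)^z / ((n−r)(n−r−1)⋯(n−r−z+1))` where `z` is the number of positions where `L''`
differs from `L`. -/
noncomputable def cCoef (n r : ℕ) (L L'' : Fin r → Fin n) : ℝ :=
  if ∃ i j : Fin r, i ≠ j ∧ L'' j = L i then 0
  else
    (-1 : ℝ) ^ ((univ.filter fun i => L'' i ≠ L i).card) /
      ∏ j ∈ Finset.range ((univ.filter fun i => L'' i ≠ L i).card), ((n : ℝ) - r - j)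

/-!
Put `M = L'[i ↦ L i]`, so that the terms of the sum are the `c(L, M[i ↦ a])`. If `M` has an entry
of `L` at a wrong position, then so has every `M[i ↦ a]`, and all terms vanish. Otherwise let `z` be
the number of positions where `M` and `L` differ. The term `a = L i` is
`(-1)^z / ((n-r)⋯(n-r-z+1))`, the other entries `a` of `L` give zero, and each `a` outside both
tuples gives `-1 / (n-r-z)` times the term at `L i`. As `L` and `M` together have `r + z` distinct
entries, there are exactly `n-r-z` such `a`, and the sum cancels.
-/

section SignedInvDescPochhammer

variable {K : Type*} [Field K]

/-- `(-1)^z / (x (x-1) ⋯ (x-z+1))`; at `x = n - r` it is the value of a nonzero coefficient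
`c(L, L'')` whose tuples differ in `z` positions. -/
def signedInvDescPochhammer (x : K) (z : ℕ) : K :=
  (-1) ^ z / ∏ j ∈ range z, (x - j)

theorem signedInvDescPochhammer_add_mul_succ {x : K} {z : ℕ} (hx : x - z ≠ 0) :
    signedInvDescPochhammer x z + (x - z) * signedInvDescPochhammer x (z + 1) = 0 := by
  have hsucc : (x - z) * signedInvDescPochhammer x (z + 1) = -signedInvDescPochhammer x z := by
    rw [signedInvDescPochhammer, prod_range_succ, mul_comm (∏ _ ∈ _, _), ← mul_div_assoc,
      mul_div_mul_left _ _ hx, pow_succ, mul_neg_one, neg_div, signedInvDescPochhammer]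
  rw [hsucc, add_neg_cancel]

end SignedInvDescPochhammer

section Tuples

variable {ι α : Type*} {L M : ι → α} {i : ι} {a : α}

/-- No entry of `L` occurs in `M` at a wrong position; this is the condition under which the
coefficient `c(L, M)` is not set to zero. -/
def IsAligned (L M : ι → α) : Prop :=
  ∀ ⦃i j⦄, i ≠ j → M j ≠ L i

theorem IsAligned.update_iff [DecidableEq ι] (h : IsAligned L M) :
    IsAligned L (Function.update M i a) ↔ ∀ k ≠ i, a ≠ L k := by
  refine ⟨fun hu k hk => by simpa using hu hk, fun ha k j hkj => ?_⟩
  obtain rfl | hj := eq_or_ne j i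
  · simpa using ha k hkj
  · simpa [hj] using h hkj

theorem IsAligned.update_left_apply [DecidableEq ι] (h : IsAligned L M) (hL : Function.Injective L)
    (i : ι) : IsAligned L (Function.update M i (L i)) :=
  h.update_iff.2 fun _ hk => hL.ne hk.symm

theorem injective_update_of_injOn [DecidableEq ι] (hM : Set.InjOn M {i}ᶜ)
    (ha : ∀ j ≠ i, M j ≠ a) : Function.Injective (Function.update M i a) := by
  have heq : Set.EqOn (Function.update M i a) M {i}ᶜ := fun _ hj => Function.update_of_ne hj ..
  have hins : insert i ({i}ᶜ : Set ι) = Set.univ := by simp [Set.insert_eq]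
  rw [← Set.injOn_univ, ← hins, Set.injOn_insert (by simp), heq.injOn_iff, heq.image_eq]
  refine ⟨hM, ?_⟩
  rintro ⟨j, hj, e⟩
  exact ha j hj (by simpa using e)

theorem IsAligned.injective_update [DecidableEq ι] (h : IsAligned L (Function.update M i (L i)))
    (hM : Set.InjOn M {i}ᶜ) : Function.Injective (Function.update M i (L i)) :=
  injective_update_of_injOn hM fun _ hj => by simpa [hj] using h hj.symm

theorem mem_insert_univ_sdiff_image_iff [Fintype ι] [Fintype α] [DecidableEq α]
    (hM : Function.Injective M) :
    a ∈ insert (M i) (univ \ univ.image M) ↔ ∀ j ≠ i, M j ≠ a := by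
  simp only [mem_insert, mem_sdiff, mem_univ, true_and, mem_image, not_exists]
  constructor
  · rintro (rfl | ha) j hj
    · exact hM.ne hj
    · exact ha j
  · intro ha
    by_cases hai : a = M i
    · exact .inl hai
    · refine .inr fun j => ?_
      obtain rfl | hj := eq_or_ne j i
      · exact Ne.symm hai
      · exact ha j hj

theorem insert_univ_sdiff_image_update [Fintype ι] [DecidableEq ι] [Fintype α] [DecidableEq α]
    (hM : Function.Injective M) (hu : Function.Injective (Function.update M i a)) :
    insert a (univ \ univ.image (Function.update M i a)) =
      insert (M i) (univ \ univ.image M) := by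
  ext b
  have hmem := mem_insert_univ_sdiff_image_iff (i := i) (a := b) hu
  rw [Function.update_self] at hmem
  rw [hmem, mem_insert_univ_sdiff_image_iff hM]
  exact forall₂_congr fun j hj => by rw [Function.update_of_ne hj]

variable [Fintype ι] [DecidableEq α]

/-- The positions where `M` differs from `L`; their number is the exponent `z` in `c(L, M)`. -/
def mismatches (L M : ι → α) : Finset ι :=
  univ.filter fun i => M i ≠ L i

theorem mem_mismatches : i ∈ mismatches L M ↔ M i ≠ L i := by
  simp [mismatches]

theorem card_mismatches_lt (hi : M i = L i) : #(mismatches L M) < Fintype.card ι :=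
  card_lt_univ_of_notMem fun h => mem_mismatches.1 h hi

theorem mismatches_update_of_ne [DecidableEq ι] (ha : a ≠ L i) :
    mismatches L (Function.update M i a) = insert i (mismatches L M) := by
  ext j
  obtain rfl | hj := eq_or_ne j i
  · simp [mem_mismatches, ha]
  · simp [mem_mismatches, hj]

theorem IsAligned.image_sdiff_image (h : IsAligned L M) :
    univ.image M \ univ.image L = (mismatches L M).image M := by
  ext a
  simp only [mem_sdiff, mem_image, mem_univ, true_and, mem_mismatches]
  constructor
  · rintro ⟨⟨j, rfl⟩, hj⟩
    exact ⟨j, fun e => hj ⟨j, e.symm⟩, rfl⟩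
  · rintro ⟨j, hj, rfl⟩
    refine ⟨⟨j, rfl⟩, ?_⟩
    rintro ⟨k, hk⟩
    obtain rfl | hkj := eq_or_ne k j
    · exact hj hk.symm
    · exact h hkj hk.symm

theorem IsAligned.card_image_union_image (h : IsAligned L M) (hL : Function.Injective L)
    (hM : Function.Injective M) :
    #(univ.image M ∪ univ.image L) = #(mismatches L M) + Fintype.card ι := by
  rw [← card_sdiff_add_card, h.image_sdiff_image, card_image_of_injective _ hM,
    card_image_of_injective _ hL, card_univ]

end Tuples

section Coefficient

variable {n r : ℕ} {L M : Fin r → Fin n} {i : Fin r} {a : Fin n}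

theorem cCoef_of_not_isAligned (h : ¬IsAligned L M) : cCoef n r L M = 0 :=
  if_pos (by simpa [IsAligned] using h)

theorem cCoef_of_isAligned (h : IsAligned L M) :
    cCoef n r L M = signedInvDescPochhammer ((n : ℝ) - r) #(mismatches L M) :=
  if_neg fun ⟨_, _, hij, e⟩ => h hij e

theorem cCoef_update_of_mem_image (ha : a ∈ univ.image L) (hi : a ≠ L i) :
    cCoef n r L (Function.update M i a) = 0 := by
  obtain ⟨k, -, rfl⟩ := mem_image.1 ha
  have hki : k ≠ i := fun e => hi (congrArg L e)
  exact cCoef_of_not_isAligned fun h => h hki (Function.update_self ..)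

theorem cCoef_update_of_notMem_image (h : IsAligned L M) (hi : M i = L i)
    (ha : a ∉ univ.image L) :
    cCoef n r L (Function.update M i a) =
      signedInvDescPochhammer ((n : ℝ) - r) (#(mismatches L M) + 1) := by
  have hne : ∀ k, a ≠ L k := fun k e => ha (e ▸ mem_image_of_mem L (mem_univ k))
  rw [cCoef_of_isAligned (h.update_iff.2 fun k _ => hne k), mismatches_update_of_ne (hne i),
    card_insert_of_notMem fun hmem => mem_mismatches.1 hmem hi]

theorem sum_cCoef_update_univ_sdiff_image (h : IsAligned L M) (hL : Function.Injective L)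
    (hM : Function.Injective M) (hi : M i = L i) :
    ∑ a ∈ univ \ univ.image M, cCoef n r L (Function.update M i a) =
      ((n : ℝ) - r - #(mismatches L M)) *
        signedInvDescPochhammer ((n : ℝ) - r) (#(mismatches L M) + 1) := by
  have hcard : (#(univ \ (univ.image M ∪ univ.image L)) : ℝ) = n - r - #(mismatches L M) := by
    rw [cast_card_sdiff (subset_univ _), h.card_image_union_image hL hM]
    simp only [card_univ, Fintype.card_fin, Nat.cast_add]
    ring
  have hsub : univ \ (univ.image M ∪ univ.image L) ⊆ univ \ univ.image M :=
    sdiff_subset_sdiff subset_rfl subset_union_left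
  rw [← sum_subset hsub, ← hcard, ← nsmul_eq_mul]
  · refine sum_eq_card_nsmul fun a ha => cCoef_update_of_notMem_image h hi ?_
    exact fun haL => (mem_sdiff.1 ha).2 (mem_union_right _ haL)
  · intro a haM haU
    simp only [mem_sdiff, mem_univ, true_and, mem_union, not_not] at haM haU
    refine cCoef_update_of_mem_image (haU.resolve_left haM) ?_
    rintro rfl
    exact haM (hi ▸ mem_image_of_mem M (mem_univ i))

theorem sum_cCoef_update_of_isAligned (h : IsAligned L M) (hL : Function.Injective L)
    (hM : Function.Injective M) (hi : M i = L i) (hn : r + #(mismatches L M) ≠ n) :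
    ∑ a ∈ insert (L i) (univ \ univ.image M), cCoef n r L (Function.update M i a) = 0 := by
  have hmem : L i ∉ univ \ univ.image M := by simp [← hi]
  have hne : (n : ℝ) - r - #(mismatches L M) ≠ 0 := by
    rw [sub_sub, sub_ne_zero]
    exact_mod_cast hn.symm
  rw [sum_insert hmem, ← hi, Function.update_eq_self, cCoef_of_isAligned h,
    sum_cCoef_update_univ_sdiff_image h hL hM hi, signedInvDescPochhammer_add_mul_succ hne]

end Coefficient

theorem coefficient_sum_vanishes (n r : ℕ) (hr : 0 < r) (hn : 2 * r ≤ n)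
    (L L' : Fin r → Fin n) (hL : Function.Injective L) (hL' : Function.Injective L')
    (i : Fin r) :
    ∑ a ∈ insert (L' i) (univ \ univ.image L'),
      cCoef n r L (Function.update L' i a) = 0 := by
  set M := Function.update L' i (L i) with hMdef
  have hMi : M i = L i := Function.update_self ..
  by_cases hM : IsAligned L M
  · have hMinj : Function.Injective M := hM.injective_update hL'.injOn
    have hlt : #(mismatches L M) < r := by simpa using card_mismatches_lt hMi
    have hsum := sum_cCoef_update_of_isAligned hM hL hMinj hMi (by lia)
    simpa only [hMdef, Function.update_idem, insert_univ_sdiff_image_update hL' hMinj] using hsum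
  · refine sum_eq_zero fun a _ => cCoef_of_not_isAligned fun ha => hM ?_
    simpa only [Function.update_idem] using ha.update_left_apply hL i
end

section
/- Let n and r be positive integers with n ≥ 2r, and let M be the real matrix whose rows and columns are indexed by the permutations π of {1, …, r}, with entries M_{π,π'} = Σ_A 1 / Π_{j=0}^{|A|−1}(n − r − j), where the sum is over all subsets A of {1, …, r} containing {i : π(i) ≠ π'(i)} (and the empty product equals 1). Then M is positive definite. -/
open Finset

/-- The change-of-basis matrix `M` indexed by permutations of `{1,…,r}`, with
`M_{π,π'} = Σ_A 1 / ((n−r)(n−r−1)⋯(n−r−|A|+1))`, the sum being over all subsets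
`A ⊆ {1,…,r}` containing `{i : π i ≠ π' i}`. -/
noncomputable def Mmat (n r : ℕ) :
    Matrix (Equiv.Perm (Fin r)) (Equiv.Perm (Fin r)) ℝ :=
  fun π π' =>
    ∑ A ∈ univ.filter (fun A : Finset (Fin r) =>
        (univ.filter fun i => π i ≠ π' i) ⊆ A),
      1 / ∏ j ∈ Finset.range A.card, ((n : ℝ) - r - j)

/-!
Exchanging the sum over `A` with the matrix entries writes `M` as a combination, with nonnegative
weights, of the `0`-`1` matrices of the relations "agree outside `A`". Such a matrix is the pullback
of an identity matrix along restriction to `Aᶜ`, hence positive semidefinite, and the term `A = ∅`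
is the identity itself. All this takes place on the matrix indexed by arbitrary functions, of which
`M` is a principal submatrix.
-/

section Agreement

variable {ι R : Type*} (β : ι → Type*) [Fintype ι] [DecidableEq ι] [∀ i, DecidableEq (β i)]

/-- The `0`-`1` matrix of the relation "agree outside `A`" on dependent functions. It is encoded as
the pullback of the identity matrix along restriction to `Aᶜ`. -/
def agreementMatrix [Zero R] [One R] (A : Finset ι) : Matrix (∀ i, β i) (∀ i, β i) R :=
  (1 : Matrix (∀ i : ↥Aᶜ, β i) (∀ i : ↥Aᶜ, β i) R).submatrix Aᶜ.restrict Aᶜ.restrict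

/-- The matrix on dependent functions whose `(f, g)` entry is the total weight of the sets outside
which `f` and `g` agree. With the weights `1 / (x (x - 1) ⋯ (x - |A| + 1))`, where `x = n - r`, it
extends the change-of-basis matrix from permutations to all functions. -/
def weightedAgreementMatrix [AddCommMonoid R] (w : Finset ι → R) :
    Matrix (∀ i, β i) (∀ i, β i) R :=
  fun f g => ∑ A with ({i | f i ≠ g i} : Finset ι) ⊆ A, w A

variable {β}

theorem filter_ne_subset_iff_restrict_compl_eq {f g : ∀ i, β i} {A : Finset ι} :
    ({i | f i ≠ g i} : Finset ι) ⊆ A ↔ Aᶜ.restrict f = Aᶜ.restrict g := by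
  simp only [subset_iff, mem_filter_univ, funext_iff, restrict, Subtype.forall, mem_compl,
    not_imp_comm]

theorem agreementMatrix_apply [Zero R] [One R] (A : Finset ι) (f g : ∀ i, β i) :
    (agreementMatrix β A f g : R) = if ({i | f i ≠ g i} : Finset ι) ⊆ A then 1 else 0 := by
  simp only [agreementMatrix, Matrix.submatrix_apply, Matrix.one_apply,
    filter_ne_subset_iff_restrict_compl_eq]

theorem agreementMatrix_empty [Zero R] [One R] :
    (agreementMatrix β ∅ : Matrix _ _ R) = 1 := by
  ext f g
  simp only [agreementMatrix_apply, Matrix.one_apply, subset_empty, filter_eq_empty_iff, mem_univ,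
    true_imp_iff, not_not, funext_iff, ne_eq]

theorem weightedAgreementMatrix_eq_sum [NonAssocSemiring R] (w : Finset ι → R) :
    weightedAgreementMatrix β w = ∑ A, w A • agreementMatrix β A := by
  ext f g
  simp only [weightedAgreementMatrix, Matrix.sum_apply, Matrix.smul_apply, agreementMatrix_apply,
    smul_eq_mul, mul_ite, mul_one, mul_zero, sum_filter]

theorem agreementMatrix_posSemidef [Ring R] [PartialOrder R] [StarRing R] [StarOrderedRing R]
    (A : Finset ι) : (agreementMatrix β A : Matrix _ _ R).PosSemidef :=
  Matrix.PosSemidef.one.submatrix _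

theorem weightedAgreementMatrix_posDef [CommRing R] [PartialOrder R] [StarRing R]
    [StarOrderedRing R] [NoZeroDivisors R] {w : Finset ι → R} (w_nonneg : ∀ A, 0 ≤ w A)
    (w_empty_pos : 0 < w ∅) : (weightedAgreementMatrix β w).PosDef := by
  rw [weightedAgreementMatrix_eq_sum, ← add_sum_erase _ _ (mem_univ ∅), agreementMatrix_empty,
    Matrix.smul_one_eq_diagonal]
  exact (Matrix.PosDef.diagonal fun _ => w_empty_pos).add_posSemidef <|
    Matrix.posSemidef_sum _ fun A _ => (agreementMatrix_posSemidef A).smul (w_nonneg A)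

theorem change_of_basis_matrix_posdef_general {x : ℝ} (hx : (Fintype.card ι : ℝ) - 1 < x) :
    (weightedAgreementMatrix β fun A => 1 / ∏ j ∈ range #A, (x - j)).PosDef := by
  have weight_pos (A : Finset ι) : 0 < 1 / ∏ j ∈ range #A, (x - j) := by
    rw [← descPochhammer_eval_eq_prod_range]
    have card_le : (#A : ℝ) ≤ Fintype.card ι := by exact_mod_cast card_le_univ A
    exact one_div_pos.mpr (descPochhammer_pos (by linarith))
  exact weightedAgreementMatrix_posDef (fun A => (weight_pos A).le) (weight_pos ∅)

end Agreement

theorem change_of_basis_matrix_posdef (n r : ℕ) (hr : 0 < r) (hn : 2 * r ≤ n) :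
    (Mmat n r).PosDef := by
  have hx : (Fintype.card (Fin r) : ℝ) - 1 < n - r := by
    have two_mul_le : (2 : ℝ) * r ≤ n := by exact_mod_cast hn
    rw [Fintype.card_fin]
    linarith
  exact (change_of_basis_matrix_posdef_general hx).submatrix DFunLike.coe_injective
end

section
/- Let n and r be positive integers with r ≤ n, and let b be a real-valued function on the injective tuples of length r of elements of {1, …, n}. Suppose that for every injective tuple J = (j₁, …, j_r) and every position i ∈ {1, …, r}, Σ_a b(j₁, …, j_{i−1}, a, j_{i+1}, …, j_r) = 0, where the sum is over all a ∈ {1, …, n} ∖ {j₁, …, j_{i−1}, j_{i+1}, …, j_r}. Then for every injective tuple L = (l₁, …, l_r), every subset A ⊆ {1, …, r}, and every bijection π₀ of {1, …, r} ∖ A onto itself: Σ b(j₁, …, j_r) = (−1)^{|A|} · Σ_{π} b(l_{π(1)}, …, l_{π(r)}), where the left sum is over all tuples (j₁, …, j_r) with pairwise distinct entries satisfying j_i = l_{π₀(i)} for i ∉ A and j_i ∈ {1, …, n} ∖ {l₁, …, l_r} for i ∈ A, and the right sum is over all permutations π of {1, …, r} with π(i) = π₀(i) for all i ∉ A. -/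
open Finset

/-! Among the injective tuples with prescribed entries off `A`, fix for each position of `A` whether
its entry lies in a given set `S`. Dropping this condition at one position `k ∈ A` leaves a family
of tuples whose `k`-th entry is unconstrained, so its total coefficient vanishes; hence moving the
`k`-th entry from outside `S` to inside `S` flips the sign of the sum. Doing so at every position
of `A`, with `S` the set of entries of `L`, turns the fresh tuples into rearrangements of `L`. -/

lemma injective_update_iff {ι α : Type*} [DecidableEq ι] {J : ι → α} (hJ : Function.Injective J)
    (k : ι) (a : α) :
    Function.Injective (Function.update J k a) ↔ ∀ i ≠ k, J i ≠ a := by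
  refine ⟨fun h i hik hia => hik (h ?_), fun h x y hxy => ?_⟩
  · rw [Function.update_of_ne hik, Function.update_self, hia]
  · grind [Function.update_apply, Function.Injective]

lemma exists_perm_comp_eq {ι α : Type*} [Finite ι] {L J : ι → α} (hJ : Function.Injective J)
    (hJL : ∀ i, J i ∈ Set.range L) : ∃ π : Equiv.Perm ι, L ∘ π = J := by
  choose f hf using hJL
  have hf_inj : Function.Injective f := .of_comp (f := L) ((funext hf : L ∘ f = J) ▸ hJ)
  exact ⟨.ofBijective f (Finite.injective_iff_bijective.mp hf_inj), funext hf⟩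

section

variable {ι α M G : Type*} [Fintype ι] [DecidableEq ι] [Fintype α] [DecidableEq α]
  [AddCommMonoid M] [AddCommGroup G]

/-- The hypothesis on the coefficients `b` at the position `i`: with all other entries of an
injective tuple held fixed, the coefficients sum to zero over the admissible values of its `i`-th
entry. The values of `b` at non-injective tuples are irrelevant. -/
def CoordSumVanishes (b : (ι → α) → M) (i : ι) : Prop :=
  ∀ J : ι → α, Function.Injective J →
    ∑ a ∈ univ \ (univ.erase i).image J, b (Function.update J i a) = 0

/-- The injective tuples that agree with `J₀` off `A` and whose entries at the positions of `A` lie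
outside `S` exactly at the positions of `F`. The signed sum formula interpolates between `F = A`
(all entries on `A` are fresh) and `F = ∅` (none is). -/
def tuplesOutsideAt (S : Finset α) (J₀ : ι → α) (A F : Finset ι) : Finset (ι → α) :=
  {J | Function.Injective J ∧ (∀ i ∉ A, J i = J₀ i) ∧ ∀ i ∈ A, (J i ∉ S ↔ i ∈ F)}

lemma mem_tuplesOutsideAt {S : Finset α} {J₀ J : ι → α} {A F : Finset ι} :
    J ∈ tuplesOutsideAt S J₀ A F ↔
      Function.Injective J ∧ (∀ i ∉ A, J i = J₀ i) ∧ ∀ i ∈ A, (J i ∉ S ↔ i ∈ F) := by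
  simp only [tuplesOutsideAt, mem_filter_univ]

lemma CoordSumVanishes.sum_eq_zero {b : (ι → α) → M} {k : ι} (hb : CoordSumVanishes b k)
    {s : Finset (ι → α)} (hinj : ∀ J ∈ s, Function.Injective J)
    (hupdate : ∀ J ∈ s, ∀ a, Function.Injective (Function.update J k a) →
      Function.update J k a ∈ s) :
    ∑ J ∈ s, b J = 0 := by
  let others (J : ι → α) : {i // i ≠ k} → α := fun i => J i
  rw [← sum_fiberwise_of_maps_to (fun J hJ => mem_image_of_mem others hJ)]
  refine Finset.sum_eq_zero fun _ hy => ?_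
  obtain ⟨J, hJ, rfl⟩ := mem_image.mp hy
  have hfiber : {J' ∈ s | others J' = others J} =
      (univ \ (univ.erase k).image J).image (Function.update J k) := by
    have hadmissible (a : α) :
        a ∈ univ \ (univ.erase k).image J ↔ Function.Injective (Function.update J k a) := by
      simp [injective_update_iff (hinj J hJ)]
    ext J'
    simp only [mem_filter, mem_image, hadmissible]
    constructor
    · rintro ⟨hJ', hothers⟩
      have hJ'_eq : Function.update J k (J' k) = J' :=
        Function.update_eq_iff.mpr ⟨rfl, fun i hik => (congrFun hothers ⟨i, hik⟩).symm⟩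
      exact ⟨J' k, hJ'_eq.symm ▸ hinj J' hJ', hJ'_eq⟩
    · rintro ⟨a, ha, rfl⟩
      exact ⟨hupdate J hJ a ha, funext fun i => Function.update_of_ne i.2 a J⟩
  rw [hfiber, sum_image (Function.update_injective J k).injOn]
  exact hb J (hinj J hJ)

lemma mem_tuplesOutsideAt_insert_union {S : Finset α} {J₀ J : ι → α} {A F : Finset ι} {k : ι}
    (hkF : k ∉ F) :
    J ∈ tuplesOutsideAt S J₀ A (insert k F) ∪ tuplesOutsideAt S J₀ A F ↔
      Function.Injective J ∧ (∀ i ∉ A, J i = J₀ i) ∧ ∀ i ∈ A, i ≠ k → (J i ∉ S ↔ i ∈ F) := by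
  simp only [mem_union, mem_tuplesOutsideAt]
  grind

lemma disjoint_tuplesOutsideAt_insert (S : Finset α) (J₀ : ι → α) {A F : Finset ι} {k : ι}
    (hkA : k ∈ A) (hkF : k ∉ F) :
    Disjoint (tuplesOutsideAt S J₀ A (insert k F)) (tuplesOutsideAt S J₀ A F) := by
  refine disjoint_left.mpr fun J hJ hJ' => hkF ?_
  rw [mem_tuplesOutsideAt] at hJ hJ'
  exact (hJ'.2.2 k hkA).mp ((hJ.2.2 k hkA).mpr (mem_insert_self k F))

lemma CoordSumVanishes.sum_tuplesOutsideAt_insert {b : (ι → α) → G} {k : ι}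
    (hb : CoordSumVanishes b k) (S : Finset α) (J₀ : ι → α) {A F : Finset ι}
    (hkA : k ∈ A) (hkF : k ∉ F) :
    ∑ J ∈ tuplesOutsideAt S J₀ A (insert k F), b J = -∑ J ∈ tuplesOutsideAt S J₀ A F, b J := by
  rw [eq_neg_iff_add_eq_zero, ← sum_union (disjoint_tuplesOutsideAt_insert S J₀ hkA hkF)]
  refine hb.sum_eq_zero (fun J hJ => ?_) fun J hJ a ha => ?_
  · exact ((mem_tuplesOutsideAt_insert_union hkF).mp hJ).1
  · rw [mem_tuplesOutsideAt_insert_union hkF] at hJ ⊢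
    refine ⟨ha, fun i hiA => ?_, fun i hiA hik => ?_⟩
    · rw [Function.update_of_ne (ne_of_mem_of_not_mem hkA hiA).symm, hJ.2.1 i hiA]
    · rw [Function.update_of_ne hik, hJ.2.2 i hiA hik]

lemma sum_tuplesOutsideAt_eq_neg_one_pow_zsmul {b : (ι → α) → G} {A F : Finset ι}
    (hb : ∀ i ∈ F, CoordSumVanishes b i) (hFA : F ⊆ A) (S : Finset α) (J₀ : ι → α) :
    ∑ J ∈ tuplesOutsideAt S J₀ A F, b J =
      (-1 : ℤ) ^ #F • ∑ J ∈ tuplesOutsideAt S J₀ A ∅, b J := by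
  induction F using Finset.induction_on with
  | empty => rw [card_empty, pow_zero, one_smul]
  | insert k F hkF ih =>
    obtain ⟨hbk, hbF⟩ := (forall_mem_insert ..).mp hb
    obtain ⟨hkA, hFA⟩ := insert_subset_iff.mp hFA
    rw [hbk.sum_tuplesOutsideAt_insert S J₀ hkA hkF, ih hbF hFA, card_insert_of_notMem hkF,
      pow_succ, mul_neg_one, neg_smul]

lemma sum_tuplesOutsideAt_empty (b : (ι → α) → M) {L : ι → α} (hL : Function.Injective L)
    (A : Finset ι) (σ : ι → ι) :
    ∑ J ∈ tuplesOutsideAt (univ.image L) (L ∘ σ) A ∅, b J =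
      ∑ π : Equiv.Perm ι with ∀ i ∉ A, π i = σ i, b fun i => L (π i) := by
  symm
  refine sum_nbij (fun π => L ∘ π) (fun π hπ => ?_) (fun π _ τ _ h => ?_) (fun J hJ => ?_)
    fun _ _ => rfl
  · rw [mem_filter_univ] at hπ
    refine mem_tuplesOutsideAt.mpr
      ⟨hL.comp π.injective, fun i hi => congrArg L (hπ i hi), fun i _ => ?_⟩
    simp only [Function.comp_apply, mem_image_of_mem L (mem_univ _), not_true_eq_false,
      notMem_empty]
  · exact DFunLike.coe_injective (hL.comp_left h)
  · obtain ⟨hJ_inj, hJ_off, hJ_on⟩ := mem_tuplesOutsideAt.mp hJ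
    have hJL (i : ι) : J i ∈ Set.range L := by
      by_cases hi : i ∈ A
      · simpa only [mem_image_univ_iff_mem_range, notMem_empty, iff_false, not_not] using hJ_on i hi
      · exact ⟨σ i, (hJ_off i hi).symm⟩
    obtain ⟨π, rfl⟩ := exists_perm_comp_eq hJ_inj hJL
    exact ⟨π, by simpa using fun i hi => hL (hJ_off i hi), rfl⟩

theorem fresh_index_sum_to_signed_permutation_sum_general (b : (ι → α) → G) (A : Finset ι)
    (hb : ∀ i ∈ A, CoordSumVanishes b i) (L : ι → α) (hL : Function.Injective L) (σ : ι → ι) :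
    ∑ J : ι → α with Function.Injective J ∧ (∀ i ∉ A, J i = L (σ i)) ∧
        ∀ i ∈ A, J i ∉ univ.image L, b J =
      (-1 : ℤ) ^ #A • ∑ π : Equiv.Perm ι with ∀ i ∉ A, π i = σ i, b fun i => L (π i) := by
  rw [← sum_tuplesOutsideAt_empty b hL, ← sum_tuplesOutsideAt_eq_neg_one_pow_zsmul hb subset_rfl]
  refine sum_congr (Finset.ext fun J => ?_) fun _ _ => rfl
  simp only [mem_filter_univ, mem_tuplesOutsideAt, Function.comp_apply]
  exact and_congr_right' (and_congr_right' (forall₂_congr fun _ hi => (iff_true_right hi).symm))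

end

theorem fresh_index_sum_to_signed_permutation_sum (n r : ℕ) (hr : 0 < r) (hrn : r ≤ n)
    (b : (Fin r → Fin n) → ℝ)
    (hsum : ∀ (J : Fin r → Fin n), Function.Injective J → ∀ i : Fin r,
      ∑ a ∈ univ \ (univ.erase i).image J, b (Function.update J i a) = 0)
    (L : Fin r → Fin n) (hL : Function.Injective L)
    (A : Finset (Fin r)) (π₀ : Equiv.Perm (Fin r)) (hπ₀ : ∀ i ∈ A, π₀ i = i) :
    ∑ J ∈ univ.filter (fun J : Fin r → Fin n =>
        Function.Injective J ∧ (∀ i ∉ A, J i = L (π₀ i)) ∧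
          (∀ i ∈ A, J i ∉ univ.image L)),
      b J =
    (-1 : ℝ) ^ A.card *
      ∑ π ∈ univ.filter (fun π : Equiv.Perm (Fin r) => ∀ i ∉ A, π i = π₀ i),
        b (fun i => L (π i)) := by
  have h := fresh_index_sum_to_signed_permutation_sum_general b A (fun i _ J hJ => hsum J hJ i)
    L hL π₀
  rw [zsmul_eq_mul, Int.cast_pow, Int.cast_neg, Int.cast_one] at h
  convert h
end

section
/- Let n be a positive integer and k a real number with 0 ≤ k ≤ n. Define a linear map Ẽ on the multilinear polynomials in ℝ[x₁, …, xₙ] by Ẽ[Π_{i∈I} x_i] = Π_{j=0}^{|I|−1} (k−j)/(n−j) for each subset I ⊆ {1, …, n} (so Ẽ[1] = 1). Then for every polynomial g ∈ ℝ[x₁, …, xₙ] such that 2·indexdeg(g) ≤ min{2⌊min{k, n−k}⌋ + 2, n}, one has Ẽ[red(g²)] ≥ 0, where red denotes the multilinear reduction replacing each x_iᵗ (t ≥ 1) by x_i. -/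
open MvPolynomial Finset

/-- The multilinear reduction: replace each `x_i ^ t` (`t ≥ 1`) by `x_i` in every
monomial. -/
noncomputable def red {n : ℕ} (p : MvPolynomial (Fin n) ℝ) : MvPolynomial (Fin n) ℝ :=
  ∑ d ∈ p.support,
    monomial (∑ i ∈ d.support, Finsupp.single i 1) (p.coeff d)

/-- The knapsack pseudo-expectation: the linear map on multilinear polynomials
determined by `Ẽ[∏_{i∈I} x_i] = ∏_{j=0}^{|I|−1} (k−j)/(n−j)`. -/
noncomputable def Eknap (n : ℕ) (k : ℝ) (p : MvPolynomial (Fin n) ℝ) : ℝ :=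
  ∑ d ∈ p.support, p.coeff d *
    ∏ j ∈ Finset.range d.support.card, ((k - j) / ((n : ℝ) - j))

/-! Write `y_i = 1 - x_i`, and let `f` be the coefficient vector of a multilinear polynomial of
degree at most `d`. Modulo multiples of `∑ i, x_i - k`, which `Ẽ` annihilates, its part of degree
`d` may be taken to be harmonic, that is, killed by `∑ i, ∂/∂x_i`. Expanding
`x_I x_J = x_I x_J ∏ i ∈ I ∩ J, (x_i + y_i)` shows that a harmonic `h` of degree `d` is
`Ẽ`-orthogonal to everything of smaller degree, and that `Ẽ[h²]` is the sum of the squares of the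
coefficients of `h` times `Ẽ[x_A y_B]`, where `A` and `B` are disjoint of size `d`. This number is
`k(k-1)⋯(k-d+1) (n-k)(n-k-1)⋯(n-k-d+1) / (n(n-1)⋯(n-2d+1))`, and an induction on `d` concludes. -/

open Matrix

section Moments

/-- The pseudo-expectation of `∏ i ∈ A, x_i * ∏ i ∈ B, (1 - x_i)` for disjoint sets `A` and `B` of
sizes `a` and `b`, when exactly `k` of `n` items are taken. -/
noncomputable def knapsackMoment {K : Type*} [Field K] (n : ℕ) (k : K) (a b : ℕ) : K :=
  (descPochhammer K a).eval k * (descPochhammer K b).eval (n - k) / n.descFactorial (a + b)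

theorem prod_range_sub_div_sub_eq_knapsackMoment {K : Type*} [Field K] (n : ℕ) (k : K) (u : ℕ) :
    ∏ j ∈ range u, (k - j) / ((n : K) - j) = knapsackMoment n k u 0 := by
  simp [knapsackMoment, prod_div_distrib, ← descPochhammer_eval_eq_prod_range,
    descPochhammer_eval_eq_descFactorial]

variable {K : Type*} [Field K] [CharZero K] {n a b : ℕ}

theorem sub_mul_knapsackMoment_succ (k : K) (h : a < n) :
    ((n : K) - a) * knapsackMoment n k (a + 1) 0 = (k - a) * knapsackMoment n k a 0 := by
  have hn : (n.descFactorial a : K) ≠ 0 := by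
    rw [Nat.cast_ne_zero, Ne, Nat.descFactorial_eq_zero_iff_lt]
    lia
  have ha : (n : K) - a ≠ 0 := sub_ne_zero.2 (mod_cast h.ne')
  simp only [knapsackMoment, add_zero, Nat.descFactorial_succ, Nat.cast_mul, Nat.cast_sub h.le,
    descPochhammer_succ_eval]
  field_simp

theorem knapsackMoment_eq_add (k : K) (h : a + b < n) :
    knapsackMoment n k a b = knapsackMoment n k (a + 1) b + knapsackMoment n k a (b + 1) := by
  have hn : (n.descFactorial (a + b) : K) ≠ 0 := by
    rw [Nat.cast_ne_zero, Ne, Nat.descFactorial_eq_zero_iff_lt]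
    lia
  have hab : (n : K) - (a + b) ≠ 0 := sub_ne_zero.2 (mod_cast h.ne')
  simp only [knapsackMoment, add_right_comm a 1 b, ← add_assoc a b 1, Nat.descFactorial_succ,
    Nat.cast_mul, Nat.cast_sub h.le, Nat.cast_add, descPochhammer_succ_eval]
  field_simp
  ring

variable {α : Type*} [DecidableEq α]

theorem knapsackMoment_eq_sum_powerset (k : K) (T : Finset α) (h : a + b + #T ≤ n) :
    knapsackMoment n k a b = ∑ S ∈ T.powerset, knapsackMoment n k (a + #(T \ S)) (b + #S) := by
  induction T using Finset.induction_on generalizing a b with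
  | empty => simp
  | insert i T hi ih =>
    rw [card_insert_of_notMem hi] at h
    rw [knapsackMoment_eq_add k (by lia), ih (by lia), ih (by lia), sum_powerset_insert hi]
    congr 1 <;> refine sum_congr rfl fun S hS => ?_
    · have hiS : i ∉ S := fun h => hi (mem_powerset.1 hS h)
      rw [insert_sdiff_of_notMem _ hiS, card_insert_of_notMem (by simp [hi])]
      congr 1
      lia
    · have hiS : i ∉ S := fun h => hi (mem_powerset.1 hS h)
      rw [insert_sdiff_insert, sdiff_insert_of_notMem hi, card_insert_of_notMem hiS]
      congr 1
      lia

/-- The expansion of `1 = ∏ i ∈ I ∩ J, (x_i + (1 - x_i))` inside the expectation of `x_I x_J`. -/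
theorem knapsackMoment_card_union (k : K) (I J : Finset α) (h : #I + #J ≤ n) :
    knapsackMoment n k #(I ∪ J) 0 =
      ∑ S ∈ (I ∩ J).powerset, knapsackMoment n k (#I + #J - #S) #S := by
  have hIJ := card_union_add_card_inter I J
  rw [knapsackMoment_eq_sum_powerset k (I ∩ J) (by lia)]
  refine sum_congr rfl fun S hS => ?_
  have hS := card_sdiff_add_card_eq_card (mem_powerset.1 hS)
  congr 1 <;> lia

theorem sum_knapsackMoment_card_insert [Fintype α] (k : K) (U : Finset α)
    (hU : #U < Fintype.card α) :
    ∑ i, knapsackMoment (Fintype.card α) k #(insert i U) 0 =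
      k * knapsackMoment (Fintype.card α) k #U 0 := by
  have inside : ∑ i ∈ U, knapsackMoment (Fintype.card α) k #(insert i U) 0 =
      #U * knapsackMoment (Fintype.card α) k #U 0 := by
    rw [← nsmul_eq_mul, ← sum_const]
    exact sum_congr rfl fun i hi => by rw [insert_eq_of_mem hi]
  have outside : ∑ i ∈ Uᶜ, knapsackMoment (Fintype.card α) k #(insert i U) 0 =
      (k - #U) * knapsackMoment (Fintype.card α) k #U 0 := by
    rw [← sub_mul_knapsackMoment_succ k hU, ← Nat.cast_sub hU.le, ← card_compl, ← nsmul_eq_mul,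
      ← sum_const]
    exact sum_congr rfl fun i hi => by rw [card_insert_of_notMem (mem_compl.1 hi)]
  rw [← sum_compl_add_sum U, inside, outside]
  ring

end Moments

section Harmonic

variable {α : Type*} [Fintype α] [DecidableEq α]

theorem sum_compl_sum_superset_insert {M : Type*} [AddCommMonoid M] (f : Finset α → M)
    (S : Finset α) :
    ∑ i ∈ Sᶜ, ∑ I with insert i S ⊆ I, f I = ∑ I with S ⊆ I, #(I \ S) • f I := by
  rw [sum_comm' (t' := {I | S ⊆ I}) (s' := fun I => I \ S)]
  · simp only [sum_const]
  · simp only [mem_compl, mem_filter_univ, mem_sdiff, insert_subset_iff]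
    tauto

/-- Coefficient vectors of the multilinear forms `∑ I, h I * x_I` of degree `d` that are killed by
`∑ i, ∂/∂x_i`. -/
structure IsHarmonic {M : Type*} [AddCommMonoid M] (d : ℕ) (h : Finset α → M) : Prop where
  eq_zero_of_card_ne : ∀ I, #I ≠ d → h I = 0
  sum_insert_eq_zero : ∀ T, ∑ i ∈ Tᶜ, h (insert i T) = 0

theorem IsHarmonic.sum_superset {M : Type*} [AddCommMonoid M] [IsAddTorsionFree M] {d : ℕ}
    {h : Finset α → M} (hh : IsHarmonic d h) (S : Finset α) : ∑ I with S ⊆ I, h I = h S := by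
  induction S using WellFoundedGT.induction with
  | ind S ih =>
    obtain hS | hS := lt_or_ge #S d
    · have key : (d - #S) • ∑ I with S ⊆ I, h I = 0 := calc
        _ = ∑ I with S ⊆ I, #(I \ S) • h I := by
          rw [smul_sum]
          refine sum_congr rfl fun I hI => ?_
          by_cases hId : #I = d
          · rw [card_sdiff_of_subset (mem_filter_univ _ |>.1 hI), hId]
          · simp [hh.eq_zero_of_card_ne I hId]
        _ = ∑ i ∈ Sᶜ, h (insert i S) := by
          rw [← sum_compl_sum_superset_insert]
          exact sum_congr rfl fun i hi => ih _ (ssubset_insert (mem_compl.1 hi))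
        _ = 0 := hh.sum_insert_eq_zero S
      rw [(smul_eq_zero_iff_right (Nat.sub_ne_zero_of_lt hS)).1 key,
        hh.eq_zero_of_card_ne S hS.ne]
    · refine sum_eq_single_of_mem S (by simp) fun I hI hne => hh.eq_zero_of_card_ne I ?_
      have := card_lt_card ((mem_filter_univ _ |>.1 hI).ssubset_of_ne hne.symm)
      lia

/-- The matrix of `∑ i, ∂/∂x_i` from multilinear forms of degree `d` to degree `d - 1`, extended by
zero to all degrees; its transpose is multiplication by `∑ i, x_i`, squares being dropped. -/
def loweringMatrix (R α : Type*) [Semiring R] [Fintype α] [DecidableEq α] (d : ℕ) :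
    Matrix (Finset α) (Finset α) R :=
  of fun T => if #T + 1 = d then ∑ i ∈ Tᶜ, Pi.single (insert i T) 1 else 0

variable {R : Type*} [Semiring R]

theorem loweringMatrix_mulVec_apply (d : ℕ) (f : Finset α → R) (T : Finset α) :
    (loweringMatrix R α d *ᵥ f) T = if #T + 1 = d then ∑ i ∈ Tᶜ, f (insert i T) else 0 := by
  change (if #T + 1 = d then ∑ i ∈ Tᶜ, Pi.single (insert i T) 1 else 0) ⬝ᵥ f = _
  split_ifs
  · simp only [sum_dotProduct, single_one_dotProduct]
  · exact zero_dotProduct f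

theorem loweringMatrix_transpose_mulVec_apply_of_card_ne {d : ℕ} (b : Finset α → R)
    {I : Finset α} (hI : #I ≠ d) : ((loweringMatrix R α d)ᵀ *ᵥ b) I = 0 := by
  refine sum_eq_zero fun T _ => mul_eq_zero_of_left ?_ _
  simp only [transpose_apply, loweringMatrix, of_apply]
  split_ifs with hT
  · rw [Finset.sum_apply]
    refine sum_eq_zero fun i hi => Pi.single_eq_of_ne ?_ 1
    rintro rfl
    exact hI (by rw [card_insert_of_notMem (mem_compl.1 hi), hT])
  · rfl

end Harmonic

section KnapsackMatrix

/-- The moment matrix of the knapsack pseudo-expectation on multilinear monomials: the entry at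
`(I, J)` is the pseudo-expectation of `∏ i ∈ I ∪ J, x_i`. -/
noncomputable def knapsackMatrix {K : Type*} [Field K] (α : Type*) [Fintype α] [DecidableEq α]
    (k : K) : Matrix (Finset α) (Finset α) K :=
  of fun I J => knapsackMoment (Fintype.card α) k #(I ∪ J) 0

variable {K : Type*} [Field K] {α : Type*} [Fintype α] [DecidableEq α]

theorem dotProduct_knapsackMatrix_mulVec_comm (k : K) (f g : Finset α → K) :
    f ⬝ᵥ knapsackMatrix α k *ᵥ g = g ⬝ᵥ knapsackMatrix α k *ᵥ f := by
  have symm : (knapsackMatrix α k)ᵀ = knapsackMatrix α k := by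
    ext I J
    simp only [knapsackMatrix, transpose_apply, of_apply, union_comm]
  rw [← dotProduct_transpose_mulVec, symm]

variable [CharZero K]

theorem sum_compl_knapsackMatrix_mulVec_insert (k : K) {d : ℕ} {f : Finset α → K}
    (hf : ∀ I, d < #I → f I = 0) {T : Finset α} (hT : #T + d < Fintype.card α) :
    ∑ i ∈ Tᶜ, (knapsackMatrix α k *ᵥ f) (insert i T) = (k - #T) * (knapsackMatrix α k *ᵥ f) T := by
  simp only [mulVec, dotProduct, knapsackMatrix, of_apply]
  rw [sum_comm, mul_sum]
  refine sum_congr rfl fun J _ => ?_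
  obtain hJ | hJ := lt_or_ge d #J
  · simp [hf J hJ]
  have inside : ∑ i ∈ T, knapsackMoment (Fintype.card α) k #(insert i (T ∪ J)) 0 =
      #T * knapsackMoment (Fintype.card α) k #(T ∪ J) 0 := by
    rw [← nsmul_eq_mul, ← sum_const]
    exact sum_congr rfl fun i hi => by rw [insert_eq_of_mem (mem_union_left J hi)]
  have total := sum_knapsackMoment_card_insert k (T ∪ J) (by grind [card_union_le T J])
  rw [← sum_compl_add_sum T, inside] at total
  simp only [insert_union, ← sum_mul, eq_sub_of_add_eq total]
  ring

/-- `Ẽ` annihilates the multiples of `∑ i, x_i - k`: multiplying by `∑ i, x_i` the monomial of a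
set `T` yields the monomials of the sets `insert i T` and `#T` copies of the monomial itself. -/
theorem loweringMatrix_transpose_mulVec_dotProduct_knapsackMatrix_mulVec (k : K) {d : ℕ}
    (hd : 2 * d ≤ Fintype.card α) (b : Finset α → K) {f : Finset α → K}
    (hf : ∀ I, d < #I → f I = 0) :
    (loweringMatrix K α d)ᵀ *ᵥ b ⬝ᵥ knapsackMatrix α k *ᵥ f =
      (fun T => if #T + 1 = d then (k - #T) * b T else 0) ⬝ᵥ knapsackMatrix α k *ᵥ f := by
  rw [dotProduct_comm, dotProduct_transpose_mulVec]
  refine sum_congr rfl fun T _ => ?_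
  simp only [loweringMatrix_mulVec_apply]
  split_ifs with hT
  · rw [sum_compl_knapsackMatrix_mulVec_insert k hf (by lia)]
    ring
  · simp

theorem IsHarmonic.knapsackMatrix_mulVec_apply {d : ℕ} {h : Finset α → K} (hh : IsHarmonic d h)
    (k : K) {J : Finset α} (hJ : d + #J ≤ Fintype.card α) :
    (knapsackMatrix α k *ᵥ h) J =
      knapsackMoment (Fintype.card α) k #J d * ∑ S ∈ J.powerset, h S := calc
  _ = ∑ I, ∑ S ∈ (I ∩ J).powerset, knapsackMoment (Fintype.card α) k (d + #J - #S) #S * h I := by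
    refine sum_congr rfl fun I _ => ?_
    by_cases hI : #I = d
    · rw [← sum_mul, ← hI, ← knapsackMoment_card_union k I J (by lia), union_comm]
      rfl
    · simp [hh.eq_zero_of_card_ne I hI]
  _ = ∑ S ∈ J.powerset, ∑ I with S ⊆ I,
        knapsackMoment (Fintype.card α) k (d + #J - #S) #S * h I :=
    sum_comm' fun I S => by
      simp only [mem_univ, true_and, mem_powerset, mem_filter_univ, subset_inter_iff, and_comm]
  _ = _ := by
    rw [mul_sum]
    refine sum_congr rfl fun S _ => ?_
    rw [← mul_sum, hh.sum_superset]
    by_cases hS : #S = d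
    · rw [hS, Nat.add_sub_cancel_left]
    · simp [hh.eq_zero_of_card_ne S hS]

theorem IsHarmonic.dotProduct_knapsackMatrix_mulVec_eq_zero {d : ℕ} {h f : Finset α → K}
    (hh : IsHarmonic d h) (k : K) (hd : 2 * d ≤ Fintype.card α) (hf : ∀ I, d ≤ #I → f I = 0) :
    f ⬝ᵥ knapsackMatrix α k *ᵥ h = 0 := by
  refine sum_eq_zero fun J _ => ?_
  obtain hJ | hJ := le_or_gt d #J
  · rw [hf J hJ, zero_mul]
  · rw [hh.knapsackMatrix_mulVec_apply k (by lia), sum_eq_zero fun S hS => ?_, mul_zero, mul_zero]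
    exact hh.eq_zero_of_card_ne S ((card_le_card (mem_powerset.1 hS)).trans_lt hJ).ne

theorem IsHarmonic.dotProduct_knapsackMatrix_mulVec_self {d : ℕ} {h : Finset α → K}
    (hh : IsHarmonic d h) (k : K) (hd : 2 * d ≤ Fintype.card α) :
    h ⬝ᵥ knapsackMatrix α k *ᵥ h = knapsackMoment (Fintype.card α) k d d * (h ⬝ᵥ h) := by
  rw [dotProduct, dotProduct, mul_sum]
  refine sum_congr rfl fun J _ => ?_
  by_cases hJ : #J = d
  · rw [hh.knapsackMatrix_mulVec_apply k (by lia), hJ,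
      sum_eq_single_of_mem J (mem_powerset_self J) fun S hS hne => hh.eq_zero_of_card_ne S ?_]
    · ring
    · have := card_lt_card ((mem_powerset.1 hS).ssubset_of_ne hne)
      lia
  · simp [hh.eq_zero_of_card_ne J hJ]

end KnapsackMatrix

section Positivity

variable {K : Type*} [Field K] [LinearOrder K] [IsStrictOrderedRing K]

theorem exists_mulVec_eq_zero_add_transpose_mulVec {m n : Type*} [Fintype m] [Fintype n]
    (A : Matrix m n K) (c : n → K) : ∃ h b, A *ᵥ h = 0 ∧ h + Aᵀ *ᵥ b = c := by
  have hrange : (A * Aᵀ).mulVecLin.range = A.mulVecLin.range := by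
    refine Submodule.eq_of_le_of_finrank_eq ?_ (rank_self_mul_transpose A)
    rw [mulVecLin_mul]
    exact LinearMap.range_comp_le_range _ _
  obtain ⟨b, hb⟩ : A *ᵥ c ∈ (A * Aᵀ).mulVecLin.range := hrange ▸ ⟨c, rfl⟩
  refine ⟨c - Aᵀ *ᵥ b, b, ?_, sub_add_cancel _ _⟩
  rw [mulVec_sub, mulVec_mulVec, ← hb, mulVecLin_apply, sub_self]

variable {α : Type*} [Fintype α] [DecidableEq α]

theorem exists_isHarmonic_add_loweringMatrix_transpose_mulVec {d : ℕ} {c : Finset α → K}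
    (hc : ∀ I, #I ≠ d → c I = 0) :
    ∃ h b, IsHarmonic d h ∧ h + (loweringMatrix K α d)ᵀ *ᵥ b = c := by
  obtain ⟨h, b, hker, hsum⟩ :=
    exists_mulVec_eq_zero_add_transpose_mulVec (loweringMatrix K α d) c
  have hcard (I : Finset α) (hI : #I ≠ d) : h I = 0 := by
    have := congrFun hsum I
    rwa [Pi.add_apply, loweringMatrix_transpose_mulVec_apply_of_card_ne b hI, add_zero,
      hc I hI] at this
  refine ⟨h, b, ⟨hcard, fun T => ?_⟩, hsum⟩
  by_cases hT : #T + 1 = d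
  · have := congrFun hker T
    rwa [loweringMatrix_mulVec_apply, if_pos hT] at this
  · exact sum_eq_zero fun i hi => hcard _ (by rwa [card_insert_of_notMem (mem_compl.1 hi)])

theorem exists_isHarmonic_add_add_dotProduct_knapsackMatrix_eq_zero (k : K) {d : ℕ}
    (hd : 2 * d ≤ Fintype.card α) {c : Finset α → K} (hc : ∀ I, d < #I → c I = 0) :
    ∃ h c' z : Finset α → K, c = h + c' + z ∧ IsHarmonic d h ∧ (∀ I, d ≤ #I → c' I = 0) ∧
      ∀ f : Finset α → K, (∀ I, d < #I → f I = 0) → z ⬝ᵥ knapsackMatrix α k *ᵥ f = 0 := by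
  let top : Finset α → K := fun I => if #I = d then c I else 0
  obtain ⟨h, b, hh, hsum⟩ :=
    exists_isHarmonic_add_loweringMatrix_transpose_mulVec (c := top) fun I hI => if_neg hI
  let b' : Finset α → K := fun T => if #T + 1 = d then (k - #T) * b T else 0
  refine ⟨h, c - top + b', (loweringMatrix K α d)ᵀ *ᵥ b - b', ?_, hh, fun I hI => ?_,
    fun f hf => ?_⟩
  · rw [← hsum]
    abel
  · have hb' : b' I = 0 := if_neg (by lia)
    obtain rfl | hI := hI.eq_or_lt
    · simp [top, hb']
    · simp [top, hb', hc I hI]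
  · rw [sub_dotProduct, sub_eq_zero]
    exact loweringMatrix_transpose_mulVec_dotProduct_knapsackMatrix_mulVec k hd b hf

theorem exists_dotProduct_knapsackMatrix_mulVec_eq_add (k : K) {d : ℕ}
    (hd : 2 * d ≤ Fintype.card α) {c : Finset α → K} (hc : ∀ I, d < #I → c I = 0) :
    ∃ h c' : Finset α → K, (∀ I, d ≤ #I → c' I = 0) ∧
      c ⬝ᵥ knapsackMatrix α k *ᵥ c =
        knapsackMoment (Fintype.card α) k d d * (h ⬝ᵥ h) + c' ⬝ᵥ knapsackMatrix α k *ᵥ c' := by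
  obtain ⟨h, c', z, hsum, hh, hc', hz⟩ :=
    exists_isHarmonic_add_add_dotProduct_knapsackMatrix_eq_zero k hd hc
  have hdeg (I : Finset α) (hI : d < #I) : (h + c') I = 0 := by
    rw [Pi.add_apply, hh.eq_zero_of_card_ne I hI.ne', hc' I hI.le, add_zero]
  have horth : c' ⬝ᵥ knapsackMatrix α k *ᵥ h = 0 :=
    hh.dotProduct_knapsackMatrix_mulVec_eq_zero k hd hc'
  refine ⟨h, c', hc', ?_⟩
  calc c ⬝ᵥ knapsackMatrix α k *ᵥ c
      = (h + c') ⬝ᵥ knapsackMatrix α k *ᵥ c := by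
        conv_lhs => rw [hsum, add_dotProduct, ← hsum, hz c hc, add_zero]
    _ = (h + c') ⬝ᵥ knapsackMatrix α k *ᵥ (h + c') := by
        rw [dotProduct_knapsackMatrix_mulVec_comm, hsum, add_dotProduct, hz _ hdeg, add_zero]
    _ = h ⬝ᵥ knapsackMatrix α k *ᵥ h + c' ⬝ᵥ knapsackMatrix α k *ᵥ c' := by
        rw [mulVec_add, add_dotProduct, dotProduct_add, dotProduct_add, horth,
          dotProduct_knapsackMatrix_mulVec_comm k h c', horth, add_zero, zero_add]
    _ = knapsackMoment (Fintype.card α) k d d * (h ⬝ᵥ h) + c' ⬝ᵥ knapsackMatrix α k *ᵥ c' := by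
        rw [hh.dotProduct_knapsackMatrix_mulVec_self k hd]

theorem dotProduct_knapsackMatrix_mulVec_self_nonneg {k : K} {d : ℕ}
    (hd : ∀ e < d, 2 * e ≤ Fintype.card α)
    (hk : ∀ e < d, 0 ≤ (descPochhammer K e).eval k *
      (descPochhammer K e).eval (Fintype.card α - k))
    {c : Finset α → K} (hc : ∀ I, d ≤ #I → c I = 0) : 0 ≤ c ⬝ᵥ knapsackMatrix α k *ᵥ c := by
  induction d generalizing c with
  | zero => simp [show c = 0 from funext fun I => hc I (Nat.zero_le _)]
  | succ d ih =>
    obtain ⟨h, c', hc', heq⟩ :=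
      exists_dotProduct_knapsackMatrix_mulVec_eq_add k (hd d d.lt_succ_self) hc
    have hmoment : 0 ≤ knapsackMoment (Fintype.card α) k d d :=
      div_nonneg (hk d d.lt_succ_self) (Nat.cast_nonneg _)
    have hnorm : 0 ≤ h ⬝ᵥ h := sum_nonneg fun I _ => mul_self_nonneg (h I)
    rw [heq]
    exact add_nonneg (mul_nonneg hmoment hnorm)
      (ih (fun e he => hd e (he.trans d.lt_succ_self)) (fun e he => hk e (he.trans d.lt_succ_self))
        hc')

end Positivity

section MultilinearCoeff

variable {σ R : Type*} [CommSemiring R]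

/-- The coefficients of the multilinear reduction of a polynomial, as a linear map: the coefficient
at `I` is the sum of the coefficients of all monomials in exactly the variables of `I`. -/
noncomputable def multilinearCoeff [DecidableEq σ] :
    MvPolynomial σ R →ₗ[R] (Finset σ → R) :=
  (basisMonomials σ R).constr R fun d => Pi.single d.support 1

variable [DecidableEq σ]

theorem multilinearCoeff_monomial (d : σ →₀ ℕ) (a : R) :
    multilinearCoeff (monomial d a) = Pi.single d.support a := by
  have h : monomial d a = a • basisMonomials σ R d := by simp [smul_monomial]
  rw [h, map_smul, multilinearCoeff, Module.Basis.constr_basis, ← Pi.single_smul, smul_eq_mul,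
    mul_one]

theorem multilinearCoeff_eq_sum (p : MvPolynomial σ R) :
    multilinearCoeff p = ∑ d ∈ p.support, Pi.single d.support (p.coeff d) := by
  conv_lhs => rw [p.as_sum, map_sum]
  simp only [multilinearCoeff_monomial]

theorem multilinearCoeff_mul_dotProduct [Fintype σ] (p q : MvPolynomial σ R) (f : Finset σ → R) :
    multilinearCoeff (p * q) ⬝ᵥ f =
      multilinearCoeff p ⬝ᵥ (of fun I J => f (I ∪ J)) *ᵥ multilinearCoeff q := by
  induction p using MvPolynomial.induction_on' with
  | add p₁ p₂ h₁ h₂ => rw [add_mul, map_add, map_add, add_dotProduct, add_dotProduct, h₁, h₂]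
  | monomial d a =>
    induction q using MvPolynomial.induction_on' with
    | add q₁ q₂ h₁ h₂ =>
      rw [mul_add, map_add, map_add, add_dotProduct, mulVec_add, dotProduct_add, h₁, h₂]
    | monomial e b =>
      simp only [monomial_mul, multilinearCoeff_monomial, Finsupp.support_add_eq_union,
        single_dotProduct, mulVec, dotProduct_single, of_apply]
      ring

end MultilinearCoeff

section Knapsack

variable {n : ℕ}

theorem multilinearCoeff_eq_zero_of_indexDeg_lt_card {p : MvPolynomial (Fin n) ℝ}
    {I : Finset (Fin n)} (hI : indexDeg p < #I) : multilinearCoeff p I = 0 := by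
  rw [multilinearCoeff_eq_sum, Finset.sum_apply]
  refine sum_eq_zero fun d hd => Pi.single_eq_of_ne ?_ _
  rintro rfl
  exact hI.not_ge (le_sup (f := fun d : Fin n →₀ ℕ => #d.support) hd)

theorem multilinearCoeff_red (p : MvPolynomial (Fin n) ℝ) :
    multilinearCoeff (red p) = multilinearCoeff p := by
  rw [multilinearCoeff_eq_sum p, red, map_sum]
  refine sum_congr rfl fun d _ => ?_
  have hsupport : (∑ i ∈ d.support, Finsupp.single i 1 : Fin n →₀ ℕ).support = d.support := by
    ext i
    simp [Finsupp.finsetSum_apply, Finsupp.single_apply]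
  rw [multilinearCoeff_monomial, hsupport]

theorem Eknap_eq_multilinearCoeff_dotProduct (k : ℝ) (p : MvPolynomial (Fin n) ℝ) :
    Eknap n k p = multilinearCoeff p ⬝ᵥ fun I => knapsackMoment n k #I 0 := by
  simp only [Eknap, multilinearCoeff_eq_sum, sum_dotProduct, single_dotProduct,
    prod_range_sub_div_sub_eq_knapsackMoment]

theorem Eknap_red_sq (k : ℝ) (g : MvPolynomial (Fin n) ℝ) :
    Eknap n k (red (g ^ 2)) =
      multilinearCoeff g ⬝ᵥ knapsackMatrix (Fin n) k *ᵥ multilinearCoeff g := by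
  rw [Eknap_eq_multilinearCoeff_dotProduct, multilinearCoeff_red, sq,
    multilinearCoeff_mul_dotProduct, knapsackMatrix, Fintype.card_fin]

theorem descPochhammer_eval_nonneg_of_le_floor_add_one {K : Type*} [Ring K] [LinearOrder K]
    [IsStrictOrderedRing K] [FloorSemiring K] {x y : K} {e : ℕ} (hx : 0 ≤ x) (hxy : x ≤ y)
    (he : e ≤ ⌊x⌋₊ + 1) : 0 ≤ (descPochhammer K e).eval y := by
  refine descPochhammer_nonneg (sub_le_iff_le_add.2 ?_)
  calc (e : K) ≤ ⌊x⌋₊ + 1 := by exact_mod_cast he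
    _ ≤ y + 1 := by grw [Nat.floor_le hx, hxy]

theorem knapsack_pseudoexpectation_psd_general (k : ℝ) (g : MvPolynomial (Fin n) ℝ)
    (hdeg : 2 * indexDeg g ≤ n)
    (hk : ∀ e ≤ indexDeg g,
      0 ≤ (descPochhammer ℝ e).eval k * (descPochhammer ℝ e).eval (n - k)) :
    0 ≤ Eknap n k (red (g ^ 2)) := by
  rw [Eknap_red_sq]
  refine dotProduct_knapsackMatrix_mulVec_self_nonneg (d := indexDeg g + 1) ?_ ?_
    fun I hI => multilinearCoeff_eq_zero_of_indexDeg_lt_card hI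
  · intro e he
    rw [Fintype.card_fin]
    lia
  · intro e he
    rw [Fintype.card_fin]
    exact hk e (Nat.le_of_lt_succ he)

end Knapsack

theorem knapsack_pseudoexpectation_psd (n : ℕ) (hn : 0 < n) (k : ℝ)
    (hk0 : 0 ≤ k) (hkn : k ≤ n) (g : MvPolynomial (Fin n) ℝ)
    (hg : 2 * indexDeg g ≤ min (2 * (⌊min k ((n : ℝ) - k)⌋).toNat + 2) n) :
    0 ≤ Eknap n k (red (g ^ 2)) := by
  have hmin : 0 ≤ min k (n - k) := le_min hk0 (sub_nonneg.2 hkn)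
  rw [Int.floor_toNat] at hg
  refine knapsack_pseudoexpectation_psd_general k g (by lia) fun e he => mul_nonneg ?_ ?_
  · exact descPochhammer_eval_nonneg_of_le_floor_add_one hmin (min_le_left _ _) (by lia)
  · exact descPochhammer_eval_nonneg_of_le_floor_add_one hmin (min_le_right _ _) (by lia)
end
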